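/- arXiv:1106.5480 — 10 statements merged into one kernel-verified Lean document; each statement's English description precedes it below -/
import Mathlib

section
/- Let P be a finite weakly graded poset with rank function rk. The following are equivalent: (I) P avoids 3+1; (II) P is vigilant and any two elements v, w with rk(w) − rk(v) ≥ 2 are comparable; (III) P is vigilant and any two elements v, w with rk(w) − rk(v) = 2 are comparable. -/
/-- A poset avoids `3+1` if it contains no chain `x < y < z` together with an
element `w` incomparable to each of `x`, `y`, `z`. -/
def AvoidsThreePlusOne (P : Type*) [PartialOrder P] : Prop :=
  ¬ ∃ w x y z : P, x < y ∧ y < z ∧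
      ¬(w ≤ x ∨ x ≤ w) ∧ ¬(w ≤ y ∨ y ≤ w) ∧ ¬(w ≤ z ∨ z ≤ w)

/-- `rk` is a rank function exhibiting `P` as weakly graded: it increases by one along
covers, and every connected component of the comparability graph contains an element of
rank `0` (so the minimal rank occurring in each component is `0`). -/
def IsWeaklyGraded (P : Type*) [PartialOrder P] (rk : P → ℕ) : Prop :=
  (∀ a b : P, a ⋖ b → rk b = rk a + 1) ∧
  ∀ v : P, ∃ u : P, Relation.ReflTransGen (fun a b : P => a ≤ b ∨ b ≤ a) v u ∧ rk u = 0

/-- `v` is up-seeing if every element of the next rank set covers it. -/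
def UpSeeing {P : Type*} [PartialOrder P] (rk : P → ℕ) (v : P) : Prop :=
  ∀ w : P, rk w = rk v + 1 → v ⋖ w

/-- `v` is down-seeing if it covers every element of the previous rank set. -/
def DownSeeing {P : Type*} [PartialOrder P] (rk : P → ℕ) (v : P) : Prop :=
  ∀ w : P, rk w + 1 = rk v → w ⋖ v

/-- A weakly graded poset is vigilant if every element is up-seeing or down-seeing. -/
def Vigilant {P : Type*} [PartialOrder P] (rk : P → ℕ) : Prop :=
  ∀ v : P, UpSeeing rk v ∨ DownSeeing rk v

/-!
For a chain `x < y < z`, an element `w` is comparable to one of the three exactly when `x ≤ w` or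
`w ≤ z`. So, in a graded poset avoiding `3+1`, whenever `x ≤ z` have ranks differing by at least
two, every `w` lies above `x` or below `z`. Connectedness enters through zigzags down to rank `0`:
an element that is not above an element of rank `0` forces, somewhere along its zigzag, a chain from
rank `0` to rank at least `2`. Comparing an element `w` of rank at least two with such a chain shows
that, when `P` avoids `3+1`, `w` lies above an element of rank `0`; hence there is `x ≤ w` of the
same rank as any `v` with `rk v + 2 ≤ rk w`, and comparing `v` with `x ≤ w` gives `v ≤ w`.
-/

theorem avoidsThreePlusOne_iff {P : Type*} [PartialOrder P] :
    AvoidsThreePlusOne P ↔ ∀ w x y z : P, x < y → y < z → x ≤ w ∨ w ≤ z := by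
  constructor
  · intro hav w x y z hxy hyz
    by_contra! ⟨hxw, hwz⟩
    have hxz := hxy.trans hyz
    refine hav ⟨w, x, y, z, hxy, hyz, ?_, ?_, ?_⟩
    · exact not_or.2 ⟨fun hwx => hwz (hwx.trans hxz.le), hxw⟩
    · exact not_or.2 ⟨fun hwy => hwz (hwy.trans hyz.le), fun hyw => hxw (hxy.le.trans hyw)⟩
    · exact not_or.2 ⟨hwz, fun hzw => hxw (hxz.le.trans hzw)⟩
  · rintro h ⟨w, x, y, z, hxy, hyz, hx, -, hz⟩
    rcases h w x y z hxy hyz with hxw | hwz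
    · exact hx (Or.inr hxw)
    · exact hz (Or.inl hwz)

theorem eq_of_le_of_strictMono {α β : Type*} [PartialOrder α] [Preorder β] {f : α → β}
    (hf : StrictMono f) {a b : α} (hab : a ≤ b) (hba : f b ≤ f a) : a = b :=
  hab.eq_of_not_lt fun hlt => (hf hlt).not_ge hba

section Rank

variable {P : Type*} [PartialOrder P] {rk : P → ℕ}

theorem covBy_of_le_of_rank_eq_add_one (hrk : StrictMono rk) {a b : P} (hab : a ≤ b)
    (h : rk b = rk a + 1) : a ⋖ b := by
  refine ⟨hab.lt_of_ne ?_, fun c hac hcb => ?_⟩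
  · rintro rfl
    omega
  · have := hrk hac
    have := hrk hcb
    omega

theorem exists_mem_Icc_rank_eq [IsStronglyAtomic P] (hcov : ∀ a b : P, a ⋖ b → rk b = rk a + 1)
    {a b : P} (hab : a ≤ b) {i : ℕ} (hai : rk a ≤ i) (hib : i ≤ rk b) :
    ∃ c ∈ Set.Icc a b, rk c = i := by
  induction i, hai using Nat.le_induction with
  | base => exact ⟨a, Set.left_mem_Icc.2 hab, rfl⟩
  | succ i _ ih =>
    obtain ⟨c, ⟨hac, hcb⟩, hc⟩ := ih (by omega)
    have hlt : c < b := hcb.lt_of_ne (by rintro rfl; omega)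
    obtain ⟨d, hcd, hdb⟩ := exists_covBy_le_of_lt hlt
    exact ⟨d, ⟨hac.trans hcd.le, hdb⟩, by rw [hcov c d hcd, hc]⟩

theorem AvoidsThreePlusOne.le_or_le_of_rank_add_two_le (hav : AvoidsThreePlusOne P)
    (hcov : ∀ a b : P, a ⋖ b → rk b = rk a + 1) {x z : P} (hxz : x ≤ z)
    (h : rk x + 2 ≤ rk z) (w : P) : x ≤ w ∨ w ≤ z := by
  have hlt : x < z := hxz.lt_of_ne (by rintro rfl; omega)
  have hncov : ¬ x ⋖ z := fun hc => by
    have := hcov x z hc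
    omega
  obtain ⟨y, hxy, hyz⟩ := exists_lt_lt_of_not_covBy hlt hncov
  exact avoidsThreePlusOne_iff.1 hav w x y z hxy hyz

theorem Vigilant.avoidsThreePlusOne (hrk : StrictMono rk) (hvig : Vigilant rk)
    (hle : ∀ v w : P, rk v + 2 ≤ rk w → v ≤ w) : AvoidsThreePlusOne P := by
  refine avoidsThreePlusOne_iff.2 fun w x y z hxy hyz => ?_
  by_contra! ⟨hxw, hwz⟩
  have hrank_xy := hrk hxy
  have hrank_yz := hrk hyz
  have hrank_xw : ¬ rk x + 2 ≤ rk w := fun h => hxw (hle x w h)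
  have hrank_wz : ¬ rk w + 2 ≤ rk z := fun h => hwz (hle w z h)
  rcases hvig w with hup | hdown
  · exact hwz (hup z (by omega)).le
  · exact hxw (hdown x (by omega)).le

namespace IsWeaklyGraded

theorem strictMono [LocallyFiniteOrder P] (hwg : IsWeaklyGraded P rk) : StrictMono rk :=
  (strictMono_iff_forall_covBy rk).2 fun a b hab => by
    rw [hwg.1 a b hab]
    exact Nat.lt_succ_self _

theorem zigzag_induction (hwg : IsWeaklyGraded P rk) {p : P → Prop}
    (zero : ∀ u, rk u = 0 → p u) (up : ∀ a b, a ≤ b → p a → p b)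
    (down : ∀ a b, a ≤ b → p b → p a) (v : P) : p v := by
  obtain ⟨u, hvu, hu⟩ := hwg.2 v
  induction hvu using Relation.ReflTransGen.head_induction_on with
  | refl => exact zero u hu
  | head hac _ ih =>
    rcases hac with hac | hca
    · exact down _ _ hac ih
    · exact up _ _ hca ih

theorem exists_rank_eq (hwg : IsWeaklyGraded P rk) (hrk : StrictMono rk) (v : P) {k : ℕ}
    (hk : k ≤ rk v) : ∃ c, rk c = k := by
  have := hrk.wellFoundedLT
  induction v using hwg.zigzag_induction with
  | zero u hu => exact ⟨u, by omega⟩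
  | up a b hab ih =>
    rcases le_total k (rk a) with hka | hak
    · exact ih hka
    · obtain ⟨c, -, hc⟩ := exists_mem_Icc_rank_eq hwg.1 hab hak hk
      exact ⟨c, hc⟩
  | down a b hab ih => exact ih (hk.trans (hrk.monotone hab))

theorem exists_rank_zero_le_or_exists_chain (hwg : IsWeaklyGraded P rk) (hrk : StrictMono rk)
    (v : P) : (∃ x ≤ v, rk x = 0) ∨ ∃ x z, x ≤ z ∧ rk x = 0 ∧ 2 ≤ rk z := by
  induction v using hwg.zigzag_induction with
  | zero u hu => exact Or.inl ⟨u, le_rfl, hu⟩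
  | up a b hab ih => exact ih.imp_left fun ⟨x, hxa, hx⟩ => ⟨x, hxa.trans hab, hx⟩
  | down a b hab ih =>
    rcases ih with ⟨x, hxb, hx⟩ | hchain
    · rcases hab.eq_or_lt with rfl | hlt
      · exact Or.inl ⟨x, hxb, hx⟩
      · rcases Nat.eq_zero_or_pos (rk a) with ha | ha
        · exact Or.inl ⟨a, le_rfl, ha⟩
        · have := hrk hlt
          exact Or.inr ⟨x, b, hxb, hx, by omega⟩
    · exact Or.inr hchain

theorem exists_rank_zero_le (hwg : IsWeaklyGraded P rk) (hrk : StrictMono rk)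
    (hav : AvoidsThreePlusOne P) {w : P} (hw : 2 ≤ rk w) : ∃ x ≤ w, rk x = 0 := by
  have := hrk.wellFoundedLT
  rcases hwg.exists_rank_zero_le_or_exists_chain hrk w with hbelow | ⟨x, z', hxz', hx, hz'⟩
  · exact hbelow
  · obtain ⟨z, ⟨hxz, -⟩, hz⟩ := exists_mem_Icc_rank_eq hwg.1 hxz' (by omega) hz'
    rcases hav.le_or_le_of_rank_add_two_le hwg.1 hxz (by omega) w with hxw | hwz
    · exact ⟨x, hxw, hx⟩
    · have hwz_eq : w = z := eq_of_le_of_strictMono hrk hwz (by omega)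
      exact ⟨x, hwz_eq ▸ hxz, hx⟩

theorem le_of_rank_add_two_le_of_avoidsThreePlusOne (hwg : IsWeaklyGraded P rk)
    (hrk : StrictMono rk) (hav : AvoidsThreePlusOne P) {v w : P} (h : rk v + 2 ≤ rk w) :
    v ≤ w := by
  have := hrk.wellFoundedLT
  obtain ⟨u, huw, hu⟩ := hwg.exists_rank_zero_le hrk hav (show 2 ≤ rk w by omega)
  obtain ⟨x, ⟨-, hxw⟩, hx⟩ : ∃ x ∈ Set.Icc u w, rk x = rk v :=
    exists_mem_Icc_rank_eq hwg.1 huw (by omega) (by omega)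
  rcases hav.le_or_le_of_rank_add_two_le hwg.1 hxw (by omega) v with hxv | hvw
  · exact eq_of_le_of_strictMono hrk hxv hx.ge ▸ hxw
  · exact hvw

theorem vigilant_of_avoidsThreePlusOne (hwg : IsWeaklyGraded P rk) (hrk : StrictMono rk)
    (hav : AvoidsThreePlusOne P) : Vigilant rk := by
  intro v
  refine or_iff_not_imp_left.2 fun hup b hb => ?_
  obtain ⟨a, ha, hva⟩ : ∃ a, rk a = rk v + 1 ∧ ¬ v ⋖ a := by
    simpa only [UpSeeing, not_forall, exists_prop] using hup
  have hba : b ≤ a := hwg.le_of_rank_add_two_le_of_avoidsThreePlusOne hrk hav (by omega)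
  have hva' : ¬ v ≤ a := fun h => hva (covBy_of_le_of_rank_eq_add_one hrk h ha)
  have hbv : b ≤ v :=
    (hav.le_or_le_of_rank_add_two_le hwg.1 hba (by omega) v).resolve_right hva'
  exact covBy_of_le_of_rank_eq_add_one hrk hbv hb.symm

theorem le_of_rank_add_two_le_of_comparable (hwg : IsWeaklyGraded P rk) (hrk : StrictMono rk)
    (hcomp : ∀ v w : P, rk w = rk v + 2 → v ≤ w ∨ w ≤ v) (v w : P) (h : rk v + 2 ≤ rk w) :
    v ≤ w := by
  have := hrk.wellFoundedLT
  have hle : ∀ v w : P, rk w = rk v + 2 → v ≤ w := fun v w h =>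
    (hcomp v w h).resolve_right fun hwv => by
      have := hrk.monotone hwv
      omega
  obtain ⟨n, hn⟩ := Nat.exists_eq_add_of_le h
  induction n generalizing v with
  | zero => exact hle v w hn
  | succ n ih =>
    obtain ⟨e, he⟩ := hwg.exists_rank_eq hrk w h
    obtain ⟨d, ⟨hvd, -⟩, hd⟩ : ∃ d ∈ Set.Icc v e, rk d = rk v + 1 :=
      exists_mem_Icc_rank_eq hwg.1 (hle v e he) (by omega) (by omega)
    exact hvd.trans (ih d (by omega) (by omega))

end IsWeaklyGraded

end Rank

theorem avoids31_tfae_general {P : Type*} [PartialOrder P] {rk : P → ℕ}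
    (hrk : StrictMono rk) (hwg : IsWeaklyGraded P rk) :
    List.TFAE
      [AvoidsThreePlusOne P,
       Vigilant rk ∧ ∀ v w : P, rk v + 2 ≤ rk w → (v ≤ w ∨ w ≤ v),
       Vigilant rk ∧ ∀ v w : P, rk w = rk v + 2 → (v ≤ w ∨ w ≤ v)] := by
  tfae_have 1 → 2 := fun hav =>
    ⟨hwg.vigilant_of_avoidsThreePlusOne hrk hav, fun _ _ h =>
      Or.inl (hwg.le_of_rank_add_two_le_of_avoidsThreePlusOne hrk hav h)⟩
  tfae_have 2 → 3 := fun ⟨hvig, hcomp⟩ => ⟨hvig, fun v w h => hcomp v w h.ge⟩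
  tfae_have 3 → 1 := fun ⟨hvig, hcomp⟩ =>
    hvig.avoidsThreePlusOne hrk (hwg.le_of_rank_add_two_le_of_comparable hrk hcomp)
  tfae_finish

theorem avoids31_tfae (P : Type*) [PartialOrder P] [Fintype P] (rk : P → ℕ)
    (hwg : IsWeaklyGraded P rk) :
    List.TFAE
      [AvoidsThreePlusOne P,
       Vigilant rk ∧ ∀ v w : P, rk v + 2 ≤ rk w → (v ≤ w ∨ w ≤ v),
       Vigilant rk ∧ ∀ v w : P, rk w = rk v + 2 → (v ≤ w ∨ w ≤ v)] := by
  classical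
  let := Fintype.toLocallyFiniteOrder (α := P)
  exact avoids31_tfae_general hwg.strictMono hwg
end

section
/- Let P be a finite weakly graded poset with rank function rk which avoids 3+1. Then any two elements v, w of P with rk(w) − rk(v) ≥ 2 satisfy v < w. -/
/-!
Fix `w` of rank at least `2` and walk in the comparability graph from `w` to an element of rank
`0`. The walk starts below an element of rank at least `rk w`, and a downward step preserves this.
An upward step from `b` to `c` can destroy it only if `rk b < rk c < rk w`, and then `b` lies at
least two ranks below `rk w`, as does the end of the walk if the property is never destroyed.
Either way there are `x ≤ y` with `rk x + 2 ≤ rk w ≤ rk y`. As ranks grow by one along covers,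
this gives `a ≤ c` with `rk a = rk w - 2` and `rk c = rk w`. Since `P` avoids 3+1, an element is
comparable to some member of any three-element chain, and ranks decide the direction of the
comparison: a chain `a < b < c` forces `a < w`, and then a chain `a < n < w` forces `v < w` as
soon as `rk v ≤ rk a`.
-/

section ThreePlusOne

variable {P α : Type*} [PartialOrder P] [Preorder α] {f : P → α} {x y z v w : P}

theorem le_of_le_or_ge_of_map_le (hf : StrictMono f) (hvw : v ≤ w ∨ w ≤ v) (h : f v ≤ f w) :
    v ≤ w :=
  hvw.elim id fun hwv => (hwv.eq_of_not_lt fun hlt => (hf hlt).not_ge h).ge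

theorem AvoidsThreePlusOne.le_or_ge_of_lt_of_lt (h : AvoidsThreePlusOne P) (hxy : x < y)
    (hyz : y < z) (w : P) : (w ≤ x ∨ x ≤ w) ∨ (w ≤ y ∨ y ≤ w) ∨ (w ≤ z ∨ z ≤ w) := by
  by_contra hw
  exact h ⟨w, x, y, z, hxy, hyz, fun hx => hw (.inl hx), fun hy => hw (.inr (.inl hy)),
    fun hz => hw (.inr (.inr hz))⟩

theorem AvoidsThreePlusOne.lt_of_map_le_right (h : AvoidsThreePlusOne P) (hf : StrictMono f)
    (hxy : x < y) (hyz : y < z) (hzw : f z ≤ f w) : x < w := by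
  have hyw : f y < f w := (hf hyz).trans_le hzw
  have hxw : f x < f w := (hf hxy).trans hyw
  rcases h.le_or_ge_of_lt_of_lt hxy hyz w with hw | hw | hw
  · exact (le_of_le_or_ge_of_map_le hf hw.symm hxw.le).lt_of_ne (ne_of_apply_ne f hxw.ne)
  · exact hxy.trans_le (le_of_le_or_ge_of_map_le hf hw.symm hyw.le)
  · exact (hxy.trans hyz).trans_le (le_of_le_or_ge_of_map_le hf hw.symm hzw)

theorem AvoidsThreePlusOne.lt_of_map_le_left (h : AvoidsThreePlusOne P) (hf : StrictMono f)
    (hxy : x < y) (hyz : y < z) (hvx : f v ≤ f x) : v < z := by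
  have hvy : f v < f y := hvx.trans_lt (hf hxy)
  have hvz : f v < f z := hvy.trans (hf hyz)
  rcases h.le_or_ge_of_lt_of_lt hxy hyz v with hv | hv | hv
  · exact (le_of_le_or_ge_of_map_le hf hv hvx).trans_lt (hxy.trans hyz)
  · exact (le_of_le_or_ge_of_map_le hf hv hvy.le).trans_lt hyz
  · exact (le_of_le_or_ge_of_map_le hf hv hvz.le).lt_of_ne (ne_of_apply_ne f hvz.ne)

end ThreePlusOne

section Rank

variable {P : Type*} [PartialOrder P] {rk : P → ℕ} {u w x y : P}

theorem exists_lt_lt_of_rank_add_two_le (hcov : ∀ a b : P, a ⋖ b → rk b = rk a + 1)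
    (hxy : x ≤ y) (h : rk x + 2 ≤ rk y) : ∃ z, x < z ∧ z < y := by
  have hlt : x < y := hxy.lt_of_ne (by rintro rfl; omega)
  refine (not_covBy_iff hlt).mp fun hcovBy => ?_
  have := hcov x y hcovBy
  omega

theorem exists_mem_Icc_rank_eq_s1 (hmono : StrictMono rk)
    (hcov : ∀ a b : P, a ⋖ b → rk b = rk a + 1) (hxy : x ≤ y) {k : ℕ} (hxk : rk x ≤ k)
    (hky : k ≤ rk y) : ∃ z ∈ Set.Icc x y, rk z = k := by
  have : WellFoundedLT P := hmono.wellFoundedLT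
  induction k, hxk using Nat.le_induction with
  | base => exact ⟨x, Set.left_mem_Icc.mpr hxy, rfl⟩
  | succ k _ ih =>
    obtain ⟨z, ⟨hxz, hzy⟩, rfl⟩ := ih (Nat.le_of_succ_le hky)
    obtain ⟨t, hzt, hty⟩ := exists_covBy_le_of_lt (hzy.lt_of_ne (by rintro rfl; omega))
    exact ⟨t, ⟨hxz.trans hzt.le, hty⟩, hcov z t hzt⟩

theorem exists_le_rank_of_reflTransGen (hmono : StrictMono rk)
    (h : Relation.ReflTransGen (fun a b : P => a ≤ b ∨ b ≤ a) w u) :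
    ∃ x y, x ≤ y ∧ (x = u ∨ rk x + 2 ≤ rk w) ∧ rk w ≤ rk y := by
  induction h with
  | refl => exact ⟨w, w, le_rfl, .inl rfl, le_rfl⟩
  | @tail b c _ hbc ih =>
    obtain ⟨x, y, hxy, rfl | hx, hy⟩ := ih
    · by_cases hc : rk w ≤ rk c
      · exact ⟨c, c, le_rfl, .inl rfl, hc⟩
      rcases hbc with hxc | hcx
      · rcases hxc.eq_or_lt with rfl | hlt
        · exact ⟨x, y, hxy, .inl rfl, hy⟩
        · have := hmono hlt
          exact ⟨x, y, hxy, .inr (by omega), hy⟩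
      · exact ⟨c, y, hcx.trans hxy, .inl rfl, hy⟩
    · exact ⟨x, y, hxy, .inr hx, hy⟩

theorem IsWeaklyGraded.exists_le_rank_add_two_eq (hwg : IsWeaklyGraded P rk)
    (hmono : StrictMono rk) (hw : 2 ≤ rk w) : ∃ a c, a ≤ c ∧ rk a + 2 = rk w ∧ rk c = rk w := by
  obtain ⟨u, hwu, hu⟩ := hwg.2 w
  obtain ⟨x, y, hxy, hx, hy⟩ := exists_le_rank_of_reflTransGen hmono hwu
  have hxw : rk x + 2 ≤ rk w := by
    rcases hx with rfl | hx <;> omega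
  obtain ⟨c, ⟨hxc, -⟩, hc⟩ := exists_mem_Icc_rank_eq_s1 hmono hwg.1 hxy (by omega) hy
  obtain ⟨a, ⟨-, hac⟩, ha⟩ :=
    exists_mem_Icc_rank_eq_s1 hmono hwg.1 hxc (k := rk w - 2) (by omega) (by omega)
  exact ⟨a, c, hac, by omega, hc⟩

theorem IsWeaklyGraded.strictMono_s1 [LocallyFiniteOrder P] (hwg : IsWeaklyGraded P rk) :
    StrictMono rk :=
  (strictMono_iff_forall_covBy rk).mpr fun a b hab => by
    rw [hwg.1 a b hab]
    exact Nat.lt_succ_self _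

end Rank

theorem lt_of_rank_ge_two_of_avoids31_general (P : Type*) [PartialOrder P] (rk : P → ℕ)
    (hmono : StrictMono rk) (hwg : IsWeaklyGraded P rk) (havoid : AvoidsThreePlusOne P) :
    ∀ v w : P, rk v + 2 ≤ rk w → v < w := by
  intro v w hvw
  obtain ⟨a, c, hac, ha, hc⟩ := hwg.exists_le_rank_add_two_eq hmono (w := w) (by omega)
  have haw : a < w := by
    obtain ⟨b, hab, hbc⟩ := exists_lt_lt_of_rank_add_two_le hwg.1 hac (by omega)
    exact havoid.lt_of_map_le_right hmono hab hbc hc.le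
  obtain ⟨n, han, hnw⟩ := exists_lt_lt_of_rank_add_two_le hwg.1 haw.le ha.le
  exact havoid.lt_of_map_le_left hmono han hnw (by omega)

theorem lt_of_rank_ge_two_of_avoids31 (P : Type*) [PartialOrder P] [Fintype P]
    (rk : P → ℕ) (hwg : IsWeaklyGraded P rk) (havoid : AvoidsThreePlusOne P) :
    ∀ v w : P, rk v + 2 ≤ rk w → v < w := by
  classical
  let : LocallyFiniteOrder P := Fintype.toLocallyFiniteOrder
  exact lt_of_rank_ge_two_of_avoids31_general P rk hwg.strictMono_s1 hwg havoid
end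

section
/- Let P be a finite weakly graded poset with rank function rk. Suppose P is vigilant and any two elements v, w with rk(w) − rk(v) = 2 are comparable. Then any two elements v, w with rk(w) − rk(v) ≥ 2 are comparable. -/
section

variable {P : Type*} [PartialOrder P] {rk : P → ℕ}

theorem Icc_rank_subset_image_Icc [IsStronglyAtomic P]
    (hcov : ∀ a b : P, a ⋖ b → rk b = rk a + 1) {a b : P} (hab : a ≤ b) :
    Set.Icc (rk a) (rk b) ⊆ rk '' Set.Icc a b := by
  rintro r ⟨har, hrb⟩
  induction r, har using Nat.le_induction with
  | base => exact ⟨a, Set.left_mem_Icc.2 hab, rfl⟩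
  | succ r _ ih =>
    obtain ⟨c, ⟨hac, hcb⟩, rfl⟩ := ih (by lia)
    have hlt : c < b := hcb.lt_of_ne (by rintro rfl; lia)
    obtain ⟨x, hcx, hxb⟩ := exists_covBy_le_of_lt hlt
    exact ⟨x, ⟨hac.trans hcx.le, hxb⟩, hcov c x hcx⟩

namespace IsWeaklyGraded

theorem isLowerSet_range_rank (hwg : IsWeaklyGraded P rk) (hmono : StrictMono rk) :
    IsLowerSet (Set.range rk) := by
  have : WellFoundedLT P := hmono.wellFoundedLT
  rintro _ r hr ⟨v, rfl⟩
  obtain ⟨u, hvu, hu⟩ := hwg.2 v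
  induction hvu using Relation.ReflTransGen.head_induction_on with
  | refl => exact ⟨u, by lia⟩
  | @head a b hab _ ih =>
    rcases le_or_gt r (rk b) with hrb | hbr
    · exact ih hrb
    · have hba : b ≤ a := hab.resolve_left fun h => (hmono.monotone h).not_gt (hbr.trans_le hr)
      obtain ⟨c, -, hc⟩ := Icc_rank_subset_image_Icc hwg.1 hba ⟨hbr.le, hr⟩
      exact ⟨c, hc⟩

theorem exists_covBy_of_rank_add_two_le (hwg : IsWeaklyGraded P rk) (hmono : StrictMono rk)
    (hle : ∀ v w : P, rk w = rk v + 2 → v ≤ w) {v w : P} (hvw : rk v + 2 ≤ rk w) :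
    ∃ x, v ⋖ x := by
  have : WellFoundedLT P := hmono.wellFoundedLT
  obtain ⟨y, hy⟩ := hwg.isLowerSet_range_rank hmono hvw ⟨w, rfl⟩
  have hvy : v < y := (hle v y hy).lt_of_ne (by rintro rfl; lia)
  obtain ⟨x, hvx, -⟩ := exists_covBy_le_of_lt hvy
  exact ⟨x, hvx⟩

theorem le_of_rank_add_two_le (hwg : IsWeaklyGraded P rk) (hmono : StrictMono rk)
    (hle : ∀ v w : P, rk w = rk v + 2 → v ≤ w) {v w : P} (hvw : rk v + 2 ≤ rk w) : v ≤ w := by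
  obtain ⟨n, hn⟩ := Nat.exists_eq_add_of_le hvw
  induction n generalizing v with
  | zero => exact hle v w hn
  | succ n ih =>
    obtain ⟨x, hvx⟩ := hwg.exists_covBy_of_rank_add_two_le hmono hle hvw
    have hx : rk x = rk v + 1 := hwg.1 v x hvx
    exact hvx.le.trans (ih (by lia) (by lia))

end IsWeaklyGraded

end

theorem comparable_of_rank_ge_two_general (P : Type*) [PartialOrder P] (rk : P → ℕ)
    (hwg : IsWeaklyGraded P rk) (hmono : StrictMono rk)
    (h2 : ∀ v w : P, rk w = rk v + 2 → (v ≤ w ∨ w ≤ v)) :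
    ∀ v w : P, rk v + 2 ≤ rk w → (v ≤ w ∨ w ≤ v) := by
  have hle : ∀ v w : P, rk w = rk v + 2 → v ≤ w := fun v w hvw =>
    (h2 v w hvw).resolve_right fun hwv => by
      have : rk w ≤ rk v := hmono.monotone hwv
      lia
  exact fun v w hvw => Or.inl (hwg.le_of_rank_add_two_le hmono hle hvw)

theorem comparable_of_rank_ge_two (P : Type*) [PartialOrder P] [Fintype P]
    (rk : P → ℕ) (hwg : IsWeaklyGraded P rk) (hvig : Vigilant rk)
    (h2 : ∀ v w : P, rk w = rk v + 2 → (v ≤ w ∨ w ≤ v)) :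
    ∀ v w : P, rk v + 2 ≤ rk w → (v ≤ w ∨ w ≤ v) := by
  classical
  let _ : LocallyFiniteOrder P := Fintype.toLocallyFiniteOrder
  exact comparable_of_rank_ge_two_general P rk hwg hwg.strictMono h2
end

section
/- Let P be a finite weakly graded poset with rank function rk which avoids 3+1, and suppose P has height k+1 with k ≥ 1 (i.e., the longest chain of P has k+1 elements). Then every maximal element of P has rank k or k−1, and every minimal element of P has rank 0 or 1. -/
/-- A finset is a chain for the order if its elements are pairwise comparable. -/
def FinChain {P : Type*} [PartialOrder P] (s : Finset P) : Prop :=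
  IsChain (· ≤ ·) (↑s : Set P)

/-!
A saturated chain from `a` to `b` has `rk b - rk a + 1` elements, so `rk b ≤ rk a + k` whenever
`a ≤ b`.

If `k ≤ 1`, the property of lying above an element of rank zero propagates along the comparability
graph: when `a < b` and `b` lies above an element of rank zero, `rk b ≤ 1` and hence `rk a = 0`.
So every rank is at most `k`.

If `k ≥ 2`, let `c₀ < ⋯ < cₖ` be a longest chain; then `rk cᵢ = rk c₀ + i`. A minimal element `v` is
comparable to one of `c₀ < c₁ < c₂`, hence lies below `c₂`. From `v < c₂` we get
`rk v ≤ rk c₀ + 1`, and from `v ≤ cₖ` we get `rk c₀ ≤ rk v`. Some minimal element has rank zero, so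
`rk c₀ = 0`. Dually, a maximal element lies above `cₖ₋₂`, which leaves only the ranks `k - 1` and
`k`.
-/

open Order

section Chains

variable {P : Type*} [PartialOrder P]

theorem FinChain.exists_ltSeries_length_eq {s : Finset P} (hs : FinChain s) {n : ℕ}
    (hcard : s.card = n + 1) : ∃ p : LTSeries P, p.length = n := by
  classical
  let _ : LinearOrder (s : Set P) := IsChain.linearOrder hs
  let e := monoEquivOfFin (s : Set P) ((Fintype.card_coe s).trans hcard)
  exact ⟨LTSeries.mk n (fun i ↦ (e i : P)) fun _ _ hij ↦ e.strictMono hij, rfl⟩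

theorem finChain_map_ltSeries (p : LTSeries P) :
    FinChain (Finset.univ.map ⟨p, p.strictMono.injective⟩) := by
  rw [FinChain, Finset.coe_map, Finset.coe_univ, Set.image_univ]
  exact p.monotone.isChain_range

theorem krullDim_eq_of_finChain {k : ℕ} (hexists : ∃ s : Finset P, FinChain s ∧ s.card = k + 1)
    (hbound : ∀ s : Finset P, FinChain s → s.card ≤ k + 1) : krullDim P = k := by
  refine le_antisymm (iSup_le fun p ↦ ?_) ?_
  · have hcard := hbound _ (finChain_map_ltSeries p)
    rw [Finset.card_map, Finset.card_fin] at hcard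
    exact_mod_cast Nat.le_of_succ_le_succ hcard
  · obtain ⟨s, hs, hcard⟩ := hexists
    exact le_krullDim_iff.mpr (hs.exists_ltSeries_length_eq hcard)

end Chains

section FiniteDimensional

variable (α : Type*) [Preorder α] [FiniteDimensionalOrder α]

theorem wellFoundedLT_of_finiteDimensionalOrder : WellFoundedLT α :=
  ⟨SetRel.IsWellFounded.of_finiteDimensional {(a, b) : α × α | a < b}⟩

theorem wellFoundedGT_of_finiteDimensionalOrder : WellFoundedGT α :=
  ⟨SetRel.IsWellFounded.inv_of_finiteDimensional {(a, b) : α × α | a < b}⟩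

end FiniteDimensional

theorem exists_isMin_le {α : Type*} [Preorder α] [WellFoundedLT α] (a : α) :
    ∃ b ≤ a, IsMin b := by
  obtain ⟨b, hba, hb⟩ := exists_minimal_le_of_wellFoundedLT (fun _ : α ↦ True) a trivial
  exact ⟨b, hba, minimal_true.mp hb⟩

section CovByRank

variable {P : Type*} [PartialOrder P] [WellFoundedLT P] [WellFoundedGT P] {rk : P → ℕ} {a b : P}

theorem exists_ltSeries_rank_eq_add_length (hrk : ∀ a b, a ⋖ b → rk b = rk a + 1) (hab : a ≤ b) :
    ∃ p : LTSeries P, p.head = a ∧ p.last = b ∧ rk b = rk a + p.length := by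
  obtain ⟨c, rfl, n, rfl, hc⟩ := exists_covBy_seq_of_wellFoundedLT_wellFoundedGT_of_le hab
  have rank_eq : ∀ i ≤ n, rk (c i) = rk (c 0) + i := by
    intro i
    induction i with
    | zero => simp
    | succ i ih => intro hi; rw [hrk _ _ (hc i hi), ih (Nat.le_of_succ_le hi), add_assoc]
  exact ⟨⟨n, fun i ↦ c i, fun i ↦ (hc i i.isLt).lt⟩, rfl, rfl, rank_eq n le_rfl⟩

theorem strictMono_of_forall_covBy_eq_add_one (hrk : ∀ a b, a ⋖ b → rk b = rk a + 1) :
    StrictMono rk := by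
  intro a b hab
  obtain ⟨p, rfl, rfl, hp⟩ := exists_ltSeries_rank_eq_add_length hrk hab.le
  have hlength : 0 < p.length := RelSeries.length_pos_of_nontrivial
    ⟨p.head, p.head_mem, p.last, p.last_mem, hab.ne⟩
  omega

theorem rank_le_rank_add_of_krullDim_le (hrk : ∀ a b, a ⋖ b → rk b = rk a + 1) {k : ℕ}
    (hdim : krullDim P ≤ k) (hab : a ≤ b) : rk b ≤ rk a + k := by
  obtain ⟨p, -, -, hp⟩ := exists_ltSeries_rank_eq_add_length hrk hab
  have hlength : p.length ≤ k := by exact_mod_cast p.length_le_krullDim.trans hdim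
  omega

end CovByRank

namespace IsWeaklyGraded

variable {P : Type*} [PartialOrder P] {rk : P → ℕ}

theorem exists_le_rank_eq_zero (hwg : IsWeaklyGraded P rk) (hmono : StrictMono rk)
    (hspan : ∀ {a b}, a ≤ b → rk b ≤ rk a + 1) (v : P) : ∃ u ≤ v, rk u = 0 := by
  obtain ⟨w, hvw, hw⟩ := hwg.2 v
  induction hvw using Relation.ReflTransGen.head_induction_on with
  | refl => exact ⟨w, le_rfl, hw⟩
  | @head a b hab _ ih =>
    obtain ⟨u, hub, hu⟩ := ih
    rcases hab with hab | hba
    · rcases hab.eq_or_lt with rfl | hlt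
      · exact ⟨u, hub, hu⟩
      · have hrank_lt := hmono hlt
        have hrank_le := hspan hub
        exact ⟨a, le_rfl, by omega⟩
    · exact ⟨u, hub.trans hba, hu⟩

theorem rank_le_of_le_one (hwg : IsWeaklyGraded P rk) (hmono : StrictMono rk) {k : ℕ} (hk : k ≤ 1)
    (hspan : ∀ {a b}, a ≤ b → rk b ≤ rk a + k) (v : P) : rk v ≤ k := by
  obtain ⟨u, huv, hu⟩ :=
    hwg.exists_le_rank_eq_zero hmono (fun hab ↦ (hspan hab).trans (by gcongr)) v
  simpa [hu] using hspan huv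

end IsWeaklyGraded

theorem rank_apply_eq_of_rank_last_le {α : Type*} [Preorder α] {rk : α → ℕ} (hmono : StrictMono rk)
    {p : LTSeries α} (hlast : rk p.last ≤ rk p.head + p.length) (i : Fin (p.length + 1)) :
    rk (p i) = rk p.head + i := by
  have hlower : rk p.head + i ≤ rk (p i) := by
    simpa using! (p.map rk hmono).apply_add_index_le_apply_add_index_nat 0 i (Fin.zero_le i)
  have hupper : rk (p i) + p.length ≤ rk p.last + i := by
    simpa using! (p.map rk hmono).apply_add_index_le_apply_add_index_nat i (Fin.last _)
      (Fin.le_last i)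
  omega

namespace AvoidsThreePlusOne

variable {P : Type*} [PartialOrder P] {v x y z : P}

theorem orderDual (h : AvoidsThreePlusOne P) : AvoidsThreePlusOne Pᵒᵈ := by
  rintro ⟨w, x, y, z, hxy, hyz, hx, hy, hz⟩
  exact h ⟨w.ofDual, z.ofDual, y.ofDual, x.ofDual, hyz, hxy, mt Or.symm hz, mt Or.symm hy,
    mt Or.symm hx⟩

theorem lt_of_isMin (h : AvoidsThreePlusOne P) (hv : IsMin v) (hxy : x < y) (hyz : y < z) :
    v < z := by
  have hle : v ≤ x ∨ v ≤ y ∨ v ≤ z := by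
    by_contra! hnle
    obtain ⟨hx, hy, hz⟩ := hnle
    exact h ⟨v, x, y, z, hxy, hyz, not_or_intro hx fun hle ↦ hx (hv hle),
      not_or_intro hy fun hle ↦ hy (hv hle), not_or_intro hz fun hle ↦ hz (hv hle)⟩
  rcases hle with hle | hle | hle
  · exact hle.trans_lt (hxy.trans hyz)
  · exact hle.trans_lt hyz
  · exact hle.lt_of_ne fun heq ↦ hv.not_lt (heq ▸ hyz)

theorem lt_of_isMax (h : AvoidsThreePlusOne P) (hv : IsMax v) (hxy : x < y) (hyz : y < z) :
    x < v :=
  h.orderDual.lt_of_isMin (v := OrderDual.toDual v) hv.toDual hyz.dual hxy.dual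

variable {rk : P → ℕ} {p : LTSeries P}

theorem rank_eq_or_eq_add_one_of_isMin (h : AvoidsThreePlusOne P) (hmono : StrictMono rk)
    (hspan : ∀ {a b}, a ≤ b → rk b ≤ rk a + p.length) (hp : 2 ≤ p.length) (hv : IsMin v) :
    rk v = rk p.head ∨ rk v = rk p.head + 1 := by
  have hrank := rank_apply_eq_of_rank_last_le hmono (hspan p.head_le_last)
  let i : Fin (p.length + 1) := ⟨2, by omega⟩
  have hvi : v < p i := h.lt_of_isMin hv (p.step ⟨0, by omega⟩) (p.step ⟨1, by omega⟩)
  have hlower : rk p.last ≤ rk v + p.length := hspan (hvi.le.trans (p.monotone (Fin.le_last i)))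
  have hupper : rk v < rk p.head + 2 := (hmono hvi).trans_eq (hrank i)
  have hlast : rk p.last = rk p.head + p.length := hrank (Fin.last _)
  omega

theorem rank_head_eq_zero [WellFoundedLT P] (h : AvoidsThreePlusOne P) (hwg : IsWeaklyGraded P rk)
    (hmono : StrictMono rk) (hspan : ∀ {a b}, a ≤ b → rk b ≤ rk a + p.length)
    (hp : 2 ≤ p.length) : rk p.head = 0 := by
  obtain ⟨u, -, hu⟩ := hwg.2 p.head
  obtain ⟨w, hwu, hw⟩ := exists_isMin_le u
  have hrank_w : rk w ≤ 0 := (hmono.monotone hwu).trans_eq hu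
  have hmin := h.rank_eq_or_eq_add_one_of_isMin hmono hspan hp hw
  omega

theorem rank_eq_or_add_one_eq_of_isMax (h : AvoidsThreePlusOne P) (hmono : StrictMono rk)
    (hspan : ∀ {a b}, a ≤ b → rk b ≤ rk a + p.length) (hp : 2 ≤ p.length) (hv : IsMax v) :
    rk v = rk p.last ∨ rk v + 1 = rk p.last := by
  have hrank := rank_apply_eq_of_rank_last_le hmono (hspan p.head_le_last)
  let i : Fin p.length := ⟨p.length - 2, by omega⟩
  let j : Fin p.length := ⟨p.length - 1, by omega⟩
  have hij : i.succ = j.castSucc := Fin.ext (show p.length - 2 + 1 = p.length - 1 by omega)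
  have hiv : p i.castSucc < v := h.lt_of_isMax hv (p.step i) (hij ▸ p.step j)
  have hupper : rk v ≤ rk p.head + p.length := hspan ((p.head_le _).trans hiv.le)
  have hlower : rk p.head + (p.length - 2) < rk v := (hrank i.castSucc).symm.trans_lt (hmono hiv)
  have hlast : rk p.last = rk p.head + p.length := hrank (Fin.last _)
  omega

end AvoidsThreePlusOne

theorem maximal_minimal_ranks_general {P : Type*} [PartialOrder P] {rk : P → ℕ}
    (hwg : IsWeaklyGraded P rk) (havoid : AvoidsThreePlusOne P) {k : ℕ} (hdim : krullDim P = k) :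
    (∀ v : P, IsMax v → rk v = k ∨ rk v + 1 = k) ∧ (∀ v : P, IsMin v → rk v = 0 ∨ rk v = 1) := by
  obtain ⟨p, rfl⟩ := le_krullDim_iff.mp hdim.ge
  have : FiniteDimensionalOrder P :=
    ⟨p, fun q ↦ by exact_mod_cast (LTSeries.length_le_krullDim q).trans hdim.le⟩
  have := wellFoundedLT_of_finiteDimensionalOrder P
  have := wellFoundedGT_of_finiteDimensionalOrder P
  have hmono : StrictMono rk := strictMono_of_forall_covBy_eq_add_one hwg.1
  have hspan {a b : P} (hab : a ≤ b) : rk b ≤ rk a + p.length :=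
    rank_le_rank_add_of_krullDim_le hwg.1 hdim.le hab
  rcases le_or_gt p.length 1 with hp | hp
  · have rank_le := hwg.rank_le_of_le_one hmono hp hspan
    exact ⟨fun v _ ↦ by have := rank_le v; omega, fun v _ ↦ by have := rank_le v; omega⟩
  · have hhead : rk p.head = 0 := havoid.rank_head_eq_zero hwg hmono hspan hp
    have hlast : rk p.last = p.length := by
      simpa [hhead] using! rank_apply_eq_of_rank_last_le hmono (hspan p.head_le_last) (Fin.last _)
    exact ⟨fun v hv ↦ hlast ▸ havoid.rank_eq_or_add_one_eq_of_isMax hmono hspan hp hv,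
      fun v hv ↦ by simpa [hhead] using havoid.rank_eq_or_eq_add_one_of_isMin hmono hspan hp hv⟩

theorem maximal_minimal_ranks (P : Type*) [PartialOrder P] [Fintype P]
    (rk : P → ℕ) (hwg : IsWeaklyGraded P rk) (havoid : AvoidsThreePlusOne P)
    (k : ℕ) (hk : 1 ≤ k)
    -- `P` has height `k + 1`: the longest chain of `P` has `k + 1` elements
    (hht₁ : ∃ s : Finset P, FinChain s ∧ s.card = k + 1)
    (hht₂ : ∀ s : Finset P, FinChain s → s.card ≤ k + 1) :
    (∀ v : P, IsMax v → rk v = k ∨ rk v = k - 1) ∧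
    (∀ v : P, IsMin v → rk v = 0 ∨ rk v = 1) := by
  obtain ⟨hmax, hmin⟩ := maximal_minimal_ranks_general hwg havoid
    (krullDim_eq_of_finChain hht₁ hht₂)
  exact ⟨fun v hv ↦ (hmax v hv).imp_right Nat.eq_sub_of_add_eq, hmin⟩
end

section
/- For all m, n ∈ ℕ, the number of bipartite graphs R on [m] ⊎ [n] with no all-seeing vertex on either side equals Σ_{i=0}^{m} (−1)^i · C(m,i) · (2^{m−i} − 1)^n. -/
/-- `R` (a bipartite graph on `[m] ⊎ [n]`, given as its edge set) has no all-seeing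
vertex on either side: no `i ∈ [m]` joined to all of `[n]`, and no `j ∈ [n]` joined to
all of `[m]`. -/
def NoAllSeeing {m n : ℕ} (R : Finset (Fin m × Fin n)) : Prop :=
  (∀ i : Fin m, ¬ ∀ j : Fin n, (i, j) ∈ R) ∧ (∀ j : Fin n, ¬ ∀ i : Fin m, (i, j) ∈ R)

/-!
Record a graph by the neighbourhoods `N b` of its right vertices. No right vertex is all-seeing
exactly when every `N b` is a proper subset of `[m]`, and no left vertex is all-seeing
exactly when every `a` is missed by some `N b`. Apply inclusion–exclusion over the sets `t` of left
vertices required to be all-seeing: each `N b` is then one of the `2 ^ (m - #t) - 1` proper subsets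
of `[m]` containing `t`, chosen independently for different `b`.
-/

open Finset

section

variable {α β γ : Type*} [Fintype α] [Fintype β]

theorem card_forall_exists_rel [Fintype γ] [DecidableEq β] (r : α → γ → Prop) [DecidableRel r] :
    (#{f : β → γ | ∀ a, ∃ b, r a (f b)} : ℤ) =
      ∑ t : Finset α, (-1) ^ #t * (#{c | ∀ a ∈ t, ¬ r a c} : ℤ) ^ Fintype.card β := by
  have := Classical.decEq γ
  let missing (a : α) : Finset (β → γ) := {f | ∀ b, ¬ r a (f b)}
  have covering_eq : ({f : β → γ | ∀ a, ∃ b, r a (f b)} : Finset (β → γ)) =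
      univ.inf fun a ↦ (missing a)ᶜ := by
    ext f
    simp [missing, mem_inf]
  have inf_missing (t : Finset α) :
      t.inf missing = Fintype.piFinset fun _ : β ↦ {c | ∀ a ∈ t, ¬ r a c} := by
    ext f
    simp only [missing, mem_inf, mem_filter_univ, Fintype.mem_piFinset]
    exact ⟨fun h b a ha ↦ h a ha b, fun h a ha b ↦ h b a ha⟩
  simp only [covering_eq, inclusion_exclusion_card_inf_compl, powerset_univ, inf_missing,
    Fintype.card_piFinset, prod_const, card_univ, Nat.cast_pow]

theorem card_superset_ne_univ [DecidableEq α] (t : Finset α) :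
    (#{A : {A : Finset α // A ≠ univ} | t ⊆ A} : ℤ) = 2 ^ (Fintype.card α - #t) - 1 := by
  have map_val : ({A : {A : Finset α // A ≠ univ} | t ⊆ A} : Finset _).map
      (Function.Embedding.subtype _) = Ico t univ := by
    ext A
    simp [ssubset_univ_iff, and_comm]
  rw [← card_map, map_val, card_Ico_finset (subset_univ t), card_univ,
    Nat.cast_pred (Nat.two_pow_pos _), Nat.cast_pow, Nat.cast_ofNat]

/-- A bipartite graph on `α ⊎ β` without all-seeing vertices, encoded by the neighbourhoods in `α`
of its vertices in `β`: proper subsets of `α` with empty intersection. -/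
def noAllSeeingEquivNeighborhoods [DecidableEq α] [DecidableEq β] :
    {R : Finset (α × β) // (∀ a, ¬ ∀ b, (a, b) ∈ R) ∧ ∀ b, ¬ ∀ a, (a, b) ∈ R} ≃
      {N : β → {A : Finset α // A ≠ univ} // ∀ a, ∃ b, a ∉ (N b).1} where
  toFun R := ⟨fun b ↦ ⟨univ.filter fun a ↦ (a, b) ∈ R.1, by simpa [filter_eq_self] using R.2.2 b⟩,
    by simpa using R.2.1⟩
  invFun N := ⟨univ.filter fun p ↦ p.1 ∈ (N.1 p.2).1, by simpa using N.2,
    fun b ↦ by simpa [eq_univ_iff_forall] using (N.1 b).2⟩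
  left_inv R := by ext; simp
  right_inv N := by ext; simp

theorem sum_neg_one_pow_card_mul_apply_card {S : Type*} [Ring S] (g : ℕ → S) :
    ∑ t : Finset α, (-1) ^ #t * g (#t) =
      ∑ i ∈ range (Fintype.card α + 1), (-1) ^ i * ((Fintype.card α).choose i) * g i := by
  rw [← powerset_univ, sum_powerset_apply_card fun i ↦ (-1) ^ i * g i, card_univ]
  simp only [nsmul_eq_mul, ← mul_assoc, Nat.cast_comm]

end

theorem card_noAllSeeing_general (α β : Type*) [Fintype α] [Fintype β] :
    (Nat.card {R : Finset (α × β) //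
        (∀ a, ¬ ∀ b, (a, b) ∈ R) ∧ ∀ b, ¬ ∀ a, (a, b) ∈ R} : ℤ) =
      ∑ i ∈ range (Fintype.card α + 1),
        (-1 : ℤ) ^ i * ((Fintype.card α).choose i) *
          (2 ^ (Fintype.card α - i) - 1) ^ Fintype.card β := by
  classical
  rw [Nat.card_congr noAllSeeingEquivNeighborhoods, Nat.card_eq_fintype_card, Fintype.card_subtype,
    card_forall_exists_rel fun a (A : {A : Finset α // A ≠ univ}) ↦ a ∉ A.1]
  simp only [not_not, ← subset_iff, card_superset_ne_univ]
  exact sum_neg_one_pow_card_mul_apply_card fun i ↦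
    (2 ^ (Fintype.card α - i) - 1 : ℤ) ^ Fintype.card β

theorem card_noAllSeeing (m n : ℕ) :
    (Nat.card {R : Finset (Fin m × Fin n) // NoAllSeeing R} : ℤ) =
      ∑ i ∈ Finset.range (m + 1),
        (-1 : ℤ) ^ i * (m.choose i) * ((2 : ℤ) ^ (m - i) - 1) ^ n := by
  simpa only [NoAllSeeing, Fintype.card_fin] using card_noAllSeeing_general (Fin m) (Fin n)
end

section
/- For all m, n ∈ ℕ, Σ_{i=0}^{m} (−1)^i · C(m,i) · (2^{m−i} − 1)^n = Σ_{j=0}^{n} (−1)^j · C(n,j) · (2^{n−j} − 1)^m (as integers). -/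
/-!
Expanding each power `(q ^ (m - i) + z) ^ n` by the binomial theorem turns the left-hand sum into a
double sum in which `q` occurs with exponent `(m - i) * (n - j)`. The result is invariant under
exchanging `(m, y)` with `(n, z)`, and `q = 2`, `y = z = -1` is the case of bipartite graphs.
-/

section BinomialDoubleSum

variable {R : Type*} [CommSemiring R]

theorem sum_pow_mul_choose_mul_add_pow (q y z : R) (m n : ℕ) :
    ∑ i ∈ Finset.range (m + 1), y ^ i * m.choose i * (q ^ (m - i) + z) ^ n =
      ∑ i ∈ Finset.range (m + 1), ∑ j ∈ Finset.range (n + 1),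
        (y ^ i * m.choose i) * (z ^ j * n.choose j) * q ^ ((m - i) * (n - j)) := by
  refine Finset.sum_congr rfl fun i _ ↦ ?_
  rw [add_comm, add_pow, Finset.mul_sum]
  refine Finset.sum_congr rfl fun j _ ↦ ?_
  rw [pow_mul]
  ring

theorem inclusion_exclusion_symmetric_general (q y z : R) (m n : ℕ) :
    ∑ i ∈ Finset.range (m + 1), y ^ i * m.choose i * (q ^ (m - i) + z) ^ n =
      ∑ j ∈ Finset.range (n + 1), z ^ j * n.choose j * (q ^ (n - j) + y) ^ m := by
  rw [sum_pow_mul_choose_mul_add_pow, sum_pow_mul_choose_mul_add_pow, Finset.sum_comm]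
  refine Finset.sum_congr rfl fun j _ ↦ Finset.sum_congr rfl fun i _ ↦ ?_
  rw [mul_comm (y ^ i * _), mul_comm (m - i)]

end BinomialDoubleSum

theorem inclusion_exclusion_symmetric (m n : ℕ) :
    ∑ i ∈ Finset.range (m + 1),
        (-1 : ℤ) ^ i * (m.choose i) * ((2 : ℤ) ^ (m - i) - 1) ^ n =
      ∑ j ∈ Finset.range (n + 1),
        (-1 : ℤ) ^ j * (n.choose j) * ((2 : ℤ) ^ (n - j) - 1) ^ m := by
  simpa only [sub_eq_add_neg] using inclusion_exclusion_symmetric_general (2 : ℤ) (-1) (-1) m n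
end

section
/- Let B(m,n) denote the number of bipartite graphs on [m] ⊎ [n] with no all-seeing vertex on either side. Then, as formal power series in two variables x, y over ℚ, Σ_{m,n ≥ 0} B(m,n) · x^m y^n/(m! n!) = e^{−x−y} · Ψ(x,y), where Ψ(x,y) = Σ_{m,n ≥ 0} 2^{mn} x^m y^n/(m! n!) and e^{−x−y} = Σ_{m,n ≥ 0} (−1)^{m+n} x^m y^n/(m! n!). -/
/-- `B m n` is the number of bipartite graphs on `[m] ⊎ [n]` with no all-seeing vertex
on either side. -/
noncomputable def B (m n : ℕ) : ℕ :=
  Nat.card {R : Finset (Fin m × Fin n) // NoAllSeeing R}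

/-- The bivariate egf `Σ B(m,n) xᵐ yⁿ/(m! n!)`, with `x`, `y` the two variables. -/
noncomputable def Bgf : MvPowerSeries (Fin 2) ℚ :=
  fun d => (B (d 0) (d 1) : ℚ) / ((d 0).factorial * (d 1).factorial)

/-- `Ψ(x, y) = Σ 2^{mn} xᵐ yⁿ/(m! n!)`. -/
noncomputable def Psi2 : MvPowerSeries (Fin 2) ℚ :=
  fun d => (2 : ℚ) ^ (d 0 * d 1) / ((d 0).factorial * (d 1).factorial)

/-- `e^{-x-y} = Σ (-1)^{m+n} xᵐ yⁿ/(m! n!)`. -/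
noncomputable def ExpNegXY : MvPowerSeries (Fin 2) ℚ :=
  fun d => (-1 : ℚ) ^ (d 0 + d 1) / ((d 0).factorial * (d 1).factorial)

/-!
A vertex is all-seeing exactly when the graph contains the star of edges at that vertex, so
inclusion-exclusion over the sets `t` of vertices forced to be all-seeing counts the graphs with
none: those containing every star of a vertex in `t` are free on the pairs that avoid `t`
altogether. The resulting alternating sum depends on `t` only through its number of vertices on
each side, and is the binomial convolution by which exponential generating functions are
multiplied.
-/

open Finset

theorem card_filter_forall_not_subset {ι E : Type*} [Fintype ι] [Fintype E] [DecidableEq E]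
    (e : ι → Finset E) :
    (#{R : Finset E | ∀ i, ¬ e i ⊆ R} : ℤ) =
      ∑ t : Finset ι, (-1) ^ #t * 2 ^ #(t.sup e)ᶜ := by
  have avoid : ({R : Finset E | ∀ i, ¬ e i ⊆ R} : Finset (Finset E)) =
      univ.inf fun i ↦ (Ici (e i))ᶜ := by
    ext R
    simp [mem_inf]
  have contain (t : Finset ι) : (t.inf fun i ↦ Ici (e i)) = Icc (t.sup e) univ := by
    ext R
    simp [mem_inf]
  simp only [avoid, inclusion_exclusion_card_inf_compl, powerset_univ, contain,
    card_Icc_finset (subset_univ _), card_univ, card_compl, Nat.cast_pow, Nat.cast_ofNat]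

section Stars

variable {α β : Type*} [Fintype α] [Fintype β]

/-- The star of a vertex `v` in the complete bipartite graph on `α ⊎ β`: the set of all pairs
incident with `v`. A graph, encoded by its edge set, contains it iff `v` is all-seeing. -/
def bipartiteStar : α ⊕ β → Finset (α × β)
  | .inl a => {a} ×ˢ univ
  | .inr b => univ ×ˢ {b}

theorem noAllSeeing_iff_forall_not_bipartiteStar_subset {m n : ℕ} (R : Finset (Fin m × Fin n)) :
    NoAllSeeing R ↔ ∀ v, ¬ bipartiteStar v ⊆ R := by
  simp [NoAllSeeing, bipartiteStar, subset_iff, Sum.forall]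

theorem compl_sup_bipartiteStar [DecidableEq α] [DecidableEq β] (t : Finset (α ⊕ β)) :
    (t.sup bipartiteStar)ᶜ = t.toLeftᶜ ×ˢ t.toRightᶜ := by
  ext ⟨a, b⟩
  simp [bipartiteStar, mem_inf, Sum.forall, imp_not_comm]

end Stars

theorem B_eq_sum_finset (m n : ℕ) :
    (B m n : ℤ) = ∑ t : Finset (Fin m ⊕ Fin n),
      (-1) ^ (#t.toLeft + #t.toRight) * 2 ^ ((m - #t.toLeft) * (n - #t.toRight)) := by
  classical
  simp only [B, noAllSeeing_iff_forall_not_bipartiteStar_subset, Nat.card_eq_fintype_card,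
    Fintype.card_subtype, card_filter_forall_not_subset, compl_sup_bipartiteStar, card_product,
    card_compl, Fintype.card_fin, card_toLeft_add_card_toRight]

section BinomialSums

variable {M : Type*} [AddCommMonoid M]

theorem sum_finset_apply_card {α : Type*} [Fintype α] (f : ℕ → ℕ → M) :
    ∑ s : Finset α, f #s (Fintype.card α - #s) =
      ∑ p ∈ antidiagonal (Fintype.card α), (Fintype.card α).choose p.1 • f p.1 p.2 := by
  rw [← powerset_univ, sum_powerset_apply_card (fun k ↦ f k (Fintype.card α - k)), card_univ,
    Nat.sum_antidiagonal_eq_sum_range_succ_mk]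

theorem sum_finset_sum_apply_card {α β : Type*} [Fintype α] [Fintype β] (f : ℕ × ℕ → ℕ × ℕ → M) :
    ∑ t : Finset (α ⊕ β), f (#t.toLeft, Fintype.card α - #t.toLeft)
        (#t.toRight, Fintype.card β - #t.toRight) =
      ∑ p ∈ antidiagonal (Fintype.card α), ∑ q ∈ antidiagonal (Fintype.card β),
        ((Fintype.card α).choose p.1 * (Fintype.card β).choose q.1) • f p q := by
  calc
    _ = ∑ s : Finset α, ∑ t : Finset β,
        f (#s, Fintype.card α - #s) (#t, Fintype.card β - #t) := by
      rw [← Fintype.sum_prod_type']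
      exact Fintype.sum_equiv sumEquiv.toEquiv _ _ fun _ ↦ rfl
    _ = _ := by
      have sum_right (p : ℕ × ℕ) := sum_finset_apply_card (α := β) fun i j ↦ f p (i, j)
      simp only [sum_right, mul_smul, ← smul_sum]
      exact sum_finset_apply_card fun i j ↦ ∑ q ∈ antidiagonal (Fintype.card β),
        (Fintype.card β).choose q.1 • f (i, j) q

theorem sum_antidiagonal_finsupp_fin_two {A : Type*} [AddMonoid A] [HasAntidiagonal A]
    [HasAntidiagonal (Fin 2 →₀ A)] (d : Fin 2 →₀ A) (f : A × A → A × A → M) :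
    ∑ p ∈ antidiagonal d, f (p.1 0, p.2 0) (p.1 1, p.2 1) =
      ∑ p ∈ antidiagonal (d 0), ∑ q ∈ antidiagonal (d 1), f p q := by
  rw [← sum_product']
  refine sum_nbij' (fun p ↦ ((p.1 0, p.2 0), (p.1 1, p.2 1)))
    (fun z ↦ (Finsupp.equivFunOnFinite.symm ![z.1.1, z.2.1],
      Finsupp.equivFunOnFinite.symm ![z.1.2, z.2.2])) ?_ ?_ ?_ ?_ ?_
  all_goals simp +contextual [Finsupp.ext_iff, Prod.ext_iff, Fin.forall_fin_two, eq_comm]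

end BinomialSums

theorem B_eq_sum_antidiagonal {R : Type*} [Ring R] (m n : ℕ) :
    (B m n : R) = ∑ p ∈ antidiagonal m, ∑ q ∈ antidiagonal n,
      (m.choose p.1 * n.choose q.1) • ((-1) ^ (p.1 + q.1) * 2 ^ (p.2 * q.2)) := by
  have cast_B := congrArg (Int.cast : ℤ → R) (B_eq_sum_finset m n)
  push_cast at cast_B
  simpa only [cast_B, Fintype.card_fin] using
    sum_finset_sum_apply_card (α := Fin m) (β := Fin n)
      fun p q ↦ (-1 : R) ^ (p.1 + q.1) * 2 ^ (p.2 * q.2)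

section BivariateEgf

variable {K : Type*} [Field K]

/-- The exponential generating function `Σ a(m,n) xᵐ yⁿ/(m! n!)` of a doubly indexed sequence `a`,
with `x` and `y` the variables `0` and `1`. -/
def bivariateEgf (a : ℕ → ℕ → K) : MvPowerSeries (Fin 2) K :=
  fun d ↦ a (d 0) (d 1) / ((d 0).factorial * (d 1).factorial)

theorem coeff_bivariateEgf (a : ℕ → ℕ → K) (d : Fin 2 →₀ ℕ) :
    MvPowerSeries.coeff d (bivariateEgf a) =
      a (d 0) (d 1) / ((d 0).factorial * (d 1).factorial) := rfl

theorem choose_div_factorial_of_mem_antidiagonal [CharZero K] {n : ℕ} {p : ℕ × ℕ}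
    (hp : p ∈ antidiagonal n) :
    (n.choose p.1 : K) / n.factorial = 1 / (p.1.factorial * p.2.factorial) := by
  obtain rfl := mem_antidiagonal.mp hp
  have factorial_ne_zero : ((p.1 + p.2).factorial : K) ≠ 0 :=
    Nat.cast_ne_zero.mpr (Nat.factorial_ne_zero _)
  rw [Nat.cast_add_choose, div_right_comm, div_self factorial_ne_zero]

theorem bivariateEgf_mul [CharZero K] (a b : ℕ → ℕ → K) :
    bivariateEgf a * bivariateEgf b = bivariateEgf fun m n ↦
      ∑ p ∈ antidiagonal m, ∑ q ∈ antidiagonal n,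
        (m.choose p.1 * n.choose q.1) • (a p.1 q.1 * b p.2 q.2) := by
  ext d
  simp only [MvPowerSeries.coeff_mul, coeff_bivariateEgf]
  rw [sum_antidiagonal_finsupp_fin_two d fun p q ↦
    a p.1 q.1 / (p.1.factorial * q.1.factorial) * (b p.2 q.2 / (p.2.factorial * q.2.factorial)),
    sum_div]
  refine sum_congr rfl fun p hp ↦ ?_
  rw [sum_div]
  refine sum_congr rfl fun q hq ↦ ?_
  calc
    _ = 1 / (p.1.factorial * p.2.factorial) * (1 / (q.1.factorial * q.2.factorial)) *
        (a p.1 q.1 * b p.2 q.2) := by ring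
    _ = ((d 0).choose p.1 / (d 0).factorial) * ((d 1).choose q.1 / (d 1).factorial) *
        (a p.1 q.1 * b p.2 q.2) := by
      rw [choose_div_factorial_of_mem_antidiagonal hp, choose_div_factorial_of_mem_antidiagonal hq]
    _ = _ := by
      rw [nsmul_eq_mul, Nat.cast_mul]
      ring

end BivariateEgf

theorem Bgf_eq_expNeg_mul_psi : Bgf = ExpNegXY * Psi2 := by
  calc
    Bgf = bivariateEgf fun m n ↦ (B m n : ℚ) := rfl
    _ = bivariateEgf (fun m n ↦ (-1) ^ (m + n)) * bivariateEgf fun m n ↦ 2 ^ (m * n) := by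
      simp only [bivariateEgf_mul, B_eq_sum_antidiagonal]
    _ = ExpNegXY * Psi2 := rfl
end

section
/- Let b(m,n) denote the number of bipartite graphs on [m] ⊎ [n] with no all-seeing vertex on either side, at least one isolated vertex in [m], and at least one isolated vertex in [n]. Then, as formal power series in x over ℚ, Σ_{m,n ≥ 1} b(m,n) · x^{m+n}/(m! n!) = (1 − e^{−x})^2 · Ψ(x), where Ψ(x) = Σ_{m,n ≥ 0} 2^{mn} x^{m+n}/(m! n!) and e^{−x} is the power series Σ_{k ≥ 0} (−1)^k x^k/k!. -/
/-- vertex `i ∈ [m]` is isolated in `R`. -/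
def IsolatedLeft {m n : ℕ} (R : Finset (Fin m × Fin n)) (i : Fin m) : Prop :=
  ∀ j : Fin n, (i, j) ∉ R

/-- vertex `j ∈ [n]` is isolated in `R`. -/
def IsolatedRight {m n : ℕ} (R : Finset (Fin m × Fin n)) (j : Fin n) : Prop :=
  ∀ i : Fin m, (i, j) ∉ R

/-- `Ψ(x) = Σ_{m,n ≥ 0} 2^{mn} x^{m+n}/(m! n!)`. -/
noncomputable def Psi : PowerSeries ℚ :=
  PowerSeries.mk fun N =>
    ∑ p ∈ Finset.HasAntidiagonal.antidiagonal N, (2 : ℚ) ^ (p.1 * p.2) / (p.1.factorial * p.2.factorial)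

/-- `e^{-x} = Σ_{k ≥ 0} (-1)^k x^k / k!`. -/
noncomputable def ExpNeg : PowerSeries ℚ :=
  PowerSeries.mk fun k => (-1 : ℚ) ^ k / k.factorial

/-- The egf `Σ_{m,n ≥ 1} b(m,n) x^{m+n}/(m! n!)` of a double sequence `b`. -/
noncomputable def egf2 (b : ℕ → ℕ → ℕ) : PowerSeries ℚ :=
  PowerSeries.mk fun N =>
    ∑ p ∈ (Finset.HasAntidiagonal.antidiagonal N).filter (fun p => 1 ≤ p.1 ∧ 1 ≤ p.2),
      (b p.1 p.2 : ℚ) / (p.1.factorial * p.2.factorial)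

/-- graphs with no all-seeing vertex, an isolated vertex in `[m]` and one in `[n]`. -/
noncomputable def bIsoIso (m n : ℕ) : ℕ :=
  Nat.card {R : Finset (Fin m × Fin n) // NoAllSeeing R ∧
    (∃ i, IsolatedLeft R i) ∧ (∃ j, IsolatedRight R j)}

/-!
A graph with an isolated vertex on each side cannot have an all-seeing vertex, so only the isolated
vertices matter. For `S ⊆ [m]` and `T ⊆ [n]`, the graphs in which all of `S` and `T` is isolated are
the `2 ^ ((m - |S|) * (n - |T|))` graphs on the remaining vertices, and inclusion–exclusion over the
nonempty sets `S` and `T` gives `b(m, n)`. On exponential generating functions, each of these two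
signed sums over subsets is multiplication by `∑_{s ≥ 1} (-1)^(s+1) x^s / s! = 1 - e^{-x}`.
-/

open Finset PowerSeries
open scoped Nat

section InclusionExclusion

variable {R ι κ X : Type*} [Ring R]

variable (R) in
/-- The sign of an intersection of `k` sets in the inclusion–exclusion formula for a union. It is
`0` for the empty intersection, so that the formula can be summed over all finite index sets. -/
def unionSign (k : ℕ) : R := if k = 0 then 0 else (-1) ^ (k + 1)

open scoped Classical in
lemma ite_exists_eq_sum_unionSign [Fintype ι] (p : ι → Prop) :
    (if ∃ i, p i then 1 else 0 : R) =
      ∑ S : Finset ι, unionSign R #S * if ∀ i ∈ S, p i then 1 else 0 := by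
  -- Subsets of a one-point type encode propositions, with union as disjunction.
  have h := indicator_biUnion_eq_sum_powerset univ (fun i ↦ {_x : Unit | p i}) (1 : Unit → R) ()
  rw [sum_filter] at h
  convert! h using 2 with S _
  · simp [Set.indicator_apply]
  · rcases S.eq_empty_or_nonempty with rfl | hS
    · simp [unionSign]
    · simp [unionSign, Set.indicator_apply, hS, hS.ne_empty]

lemma natCast_card_and_exists_eq_sum_unionSign [Finite X] [Fintype ι] (q : X → Prop)
    (P : ι → X → Prop) :
    (Nat.card {x // q x ∧ ∃ i, P i x} : R) =
      ∑ S : Finset ι, unionSign R #S * Nat.card {x // q x ∧ ∀ i ∈ S, P i x} := by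
  classical
  have := Fintype.ofFinite X
  simp only [Nat.card_eq_fintype_card, Fintype.card_subtype, ← filter_filter, natCast_card_filter,
    ite_exists_eq_sum_unionSign, mul_sum]
  exact sum_comm

lemma natCast_card_exists_and_exists_eq_sum_unionSign [Finite X] [Fintype ι] [Fintype κ]
    (P : ι → X → Prop) (Q : κ → X → Prop) :
    (Nat.card {x // (∃ i, P i x) ∧ ∃ j, Q j x} : R) =
      ∑ S : Finset ι, unionSign R #S *
        ∑ T : Finset κ, unionSign R #T * Nat.card {x // (∀ i ∈ S, P i x) ∧ ∀ j ∈ T, Q j x} := by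
  simp only [and_comm (a := ∃ i, P i _), natCast_card_and_exists_eq_sum_unionSign _ P]
  simp only [and_comm (a := ∃ j, Q j _), natCast_card_and_exists_eq_sum_unionSign _ Q]

end InclusionExclusion

section IsolatedVertices

variable {m n : ℕ}

lemma noAllSeeing_of_isolated {R : Finset (Fin m × Fin n)} {i : Fin m} {j : Fin n}
    (hi : IsolatedLeft R i) (hj : IsolatedRight R j) : NoAllSeeing R :=
  ⟨fun i' h ↦ hj i' (h j), fun j' h ↦ hi j' (h i)⟩

lemma forall_isolated_iff_subset {R : Finset (Fin m × Fin n)} {S : Finset (Fin m)}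
    {T : Finset (Fin n)} :
    ((∀ i ∈ S, IsolatedLeft R i) ∧ ∀ j ∈ T, IsolatedRight R j) ↔ R ⊆ Sᶜ ×ˢ Tᶜ := by
  simp only [IsolatedLeft, IsolatedRight, subset_iff, mem_product, mem_compl, Prod.forall]
  grind

lemma card_forall_isolated (S : Finset (Fin m)) (T : Finset (Fin n)) :
    Nat.card {R : Finset (Fin m × Fin n) //
      (∀ i ∈ S, IsolatedLeft R i) ∧ ∀ j ∈ T, IsolatedRight R j} = 2 ^ (#Sᶜ * #Tᶜ) := by
  simp only [forall_isolated_iff_subset, Nat.card_eq_fintype_card, Fintype.card_subtype,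
    filter_subset_univ, card_powerset, card_product]

lemma bIsoIso_eq_card_exists_isolated (m n : ℕ) :
    bIsoIso m n = Nat.card {R : Finset (Fin m × Fin n) //
      (∃ i, IsolatedLeft R i) ∧ ∃ j, IsolatedRight R j} :=
  Nat.card_congr <| Equiv.subtypeEquivRight fun _ ↦
    and_iff_right_of_imp fun ⟨⟨_, hi⟩, _, hj⟩ ↦ noAllSeeing_of_isolated hi hj

lemma natCast_bIsoIso_eq_sum_unionSign {R : Type*} [Ring R] (m n : ℕ) :
    (bIsoIso m n : R) = ∑ S : Finset (Fin m), unionSign R #S *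
      ∑ T : Finset (Fin n), unionSign R #T * 2 ^ (#Sᶜ * #Tᶜ) := by
  rw [bIsoIso_eq_card_exists_isolated,
    natCast_card_exists_and_exists_eq_sum_unionSign (fun i G ↦ IsolatedLeft G i)
      fun j G ↦ IsolatedRight G j]
  simp only [card_forall_isolated, Nat.cast_pow, Nat.cast_ofNat]

lemma bIsoIso_zero_left (n : ℕ) : bIsoIso 0 n = 0 := by
  simp [bIsoIso]

lemma bIsoIso_zero_right (m : ℕ) : bIsoIso m 0 = 0 := by
  simp [bIsoIso]

end IsolatedVertices

section ExponentialGeneratingFunctions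

lemma sum_antidiagonal_assoc {A M : Type*} [AddMonoid A] [HasAntidiagonal A] [AddCommMonoid M]
    (f : A → A → A → M) (n : A) :
    ∑ p ∈ antidiagonal n, ∑ q ∈ antidiagonal p.1, f q.1 q.2 p.2 =
      ∑ p ∈ antidiagonal n, ∑ q ∈ antidiagonal p.2, f p.1 q.1 q.2 := by
  simp only [sum_sigma']
  apply sum_nbij' (fun ⟨⟨_, c⟩, (a, b)⟩ ↦ ⟨(a, b + c), (b, c)⟩)
    (fun ⟨⟨a, _⟩, (b, c)⟩ ↦ ⟨(a + b, c), (a, b)⟩) <;>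
    grind [HasAntidiagonal.mem_antidiagonal, add_assoc]

variable {K : Type*} [Field K]

/-- The exponential generating function `∑ w(n) xⁿ / n!` of a sequence `w`. -/
noncomputable def egf (w : ℕ → K) : K⟦X⟧ :=
  mk fun n ↦ w n / n !

/-- The exponential generating function `∑ F(m, n) x^(m+n) / (m! n!)` of a double sequence `F`, with
both variables set equal to `x`. Unlike in `egf2`, the sum runs over all `m, n ≥ 0`. -/
noncomputable def diagEgf (F : ℕ → ℕ → K) : K⟦X⟧ :=
  mk fun N ↦ ∑ p ∈ antidiagonal N, F p.1 p.2 / (p.1 ! * p.2 !)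

lemma diagEgf_swap (F : ℕ → ℕ → K) : diagEgf (fun m n ↦ F n m) = diagEgf F := by
  ext N
  simp only [diagEgf, coeff_mk]
  rw [← Nat.sum_antidiagonal_swap]
  exact sum_congr rfl fun p _ ↦ by rw [Prod.fst_swap, Prod.snd_swap, mul_comm]

lemma sum_card_card_compl_div_factorial [CharZero K] {α : Type*} [Fintype α] [DecidableEq α]
    (f : ℕ → ℕ → K) :
    (∑ S : Finset α, f #S #Sᶜ) / (Fintype.card α)! =
      ∑ p ∈ antidiagonal (Fintype.card α), f p.1 p.2 / (p.1 ! * p.2 !) := by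
  simp only [card_compl]
  rw [← powerset_univ, sum_powerset_apply_card fun k ↦ f k (Fintype.card α - k), card_univ,
    Nat.sum_antidiagonal_eq_sum_range_succ_mk, sum_div]
  refine sum_congr rfl fun k hk ↦ ?_
  rw [nsmul_eq_mul, Nat.cast_choose K (mem_range_succ_iff.mp hk)]
  have : ((Fintype.card α)! : K) ≠ 0 := Nat.cast_ne_zero.mpr (Nat.factorial_ne_zero _)
  field_simp

lemma diagEgf_sum_mul_left [CharZero K] (w : ℕ → K) (F : ℕ → ℕ → K) :
    diagEgf (fun m n ↦ ∑ S : Finset (Fin m), w #S * F #Sᶜ n) = egf w * diagEgf F := by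
  ext N
  have slice (m n : ℕ) : (∑ S : Finset (Fin m), w #S * F #Sᶜ n) / (m ! * n !) =
      ∑ q ∈ antidiagonal m, w q.1 / q.1 ! * (F q.2 n / (q.2 ! * n !)) := by
    have := sum_card_card_compl_div_factorial (α := Fin m) fun s m' ↦ w s * F m' n
    rw [Fintype.card_fin] at this
    rw [← div_div, this, sum_div]
    exact sum_congr rfl fun q _ ↦ by ring
  simp only [diagEgf, egf, coeff_mul, coeff_mk, slice, mul_sum]
  exact sum_antidiagonal_assoc (fun s m n ↦ w s / s ! * (F m n / (m ! * n !))) N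

lemma diagEgf_sum_mul_right [CharZero K] (w : ℕ → K) (F : ℕ → ℕ → K) :
    diagEgf (fun m n ↦ ∑ T : Finset (Fin n), w #T * F m #Tᶜ) = egf w * diagEgf F := by
  rw [← diagEgf_swap F, ← diagEgf_sum_mul_left, ← diagEgf_swap]

lemma egf2_eq_diagEgf {b : ℕ → ℕ → ℕ} (hl : ∀ n, b 0 n = 0) (hr : ∀ m, b m 0 = 0) :
    egf2 b = diagEgf fun m n ↦ (b m n : ℚ) := by
  ext N
  simp only [egf2, diagEgf, coeff_mk]
  refine sum_filter_of_ne fun p _ hp ↦ ?_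
  have hb : b p.1 p.2 ≠ 0 := fun h ↦ hp (by simp [h])
  exact ⟨Nat.one_le_iff_ne_zero.mpr fun h ↦ hb (h ▸ hl p.2),
    Nat.one_le_iff_ne_zero.mpr fun h ↦ hb (h ▸ hr p.1)⟩

lemma egf_unionSign : egf (unionSign ℚ) = 1 - ExpNeg := by
  ext k
  rcases eq_or_ne k 0 with rfl | hk
  · simp [egf, ExpNeg, unionSign]
  · simp [egf, ExpNeg, unionSign, coeff_one, hk, pow_succ, neg_div]

lemma diagEgf_two_pow_mul : diagEgf (fun m n ↦ 2 ^ (m * n)) = Psi := rfl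

end ExponentialGeneratingFunctions

theorem egf_isoIso : egf2 bIsoIso = (1 - ExpNeg) ^ 2 * Psi := by
  calc
    egf2 bIsoIso = diagEgf fun m n ↦ (bIsoIso m n : ℚ) :=
      egf2_eq_diagEgf bIsoIso_zero_left bIsoIso_zero_right
    _ = diagEgf fun m n ↦ ∑ S : Finset (Fin m), unionSign ℚ #S *
          ∑ T : Finset (Fin n), unionSign ℚ #T * 2 ^ (#Sᶜ * #Tᶜ) := by
      simp only [natCast_bIsoIso_eq_sum_unionSign]
    _ = egf (unionSign ℚ) *
          diagEgf fun m n ↦ ∑ T : Finset (Fin n), unionSign ℚ #T * 2 ^ (m * #Tᶜ) :=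
      diagEgf_sum_mul_left _ fun m n ↦ ∑ T : Finset (Fin n), unionSign ℚ #T * 2 ^ (m * #Tᶜ)
    _ = egf (unionSign ℚ) * (egf (unionSign ℚ) * diagEgf fun m n ↦ 2 ^ (m * n)) := by
      rw [diagEgf_sum_mul_right _ fun m n ↦ 2 ^ (m * n)]
    _ = (1 - ExpNeg) ^ 2 * Psi := by
      rw [egf_unionSign, diagEgf_two_pow_mul, sq, mul_assoc]
end

section
/- Let b(m,n) denote the number of bipartite graphs on [m] ⊎ [n] with no all-seeing vertex on either side, no isolated vertex in [m], and no isolated vertex in [n]. Then, as formal power series in x over ℚ, Σ_{m,n ≥ 1} b(m,n) · x^{m+n}/(m! n!) = (2e^{−x} − 1)·((2e^{−x} − 1)·Ψ(x) − 1), where Ψ(x) = Σ_{m,n ≥ 0} 2^{mn} x^{m+n}/(m! n!) and e^{−x} is the power series Σ_{k ≥ 0} (−1)^k x^k/k!. -/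
/-- graphs with no all-seeing vertex and no isolated vertex on either side. -/
noncomputable def bNoIsoNoIso (m n : ℕ) : ℕ :=
  Nat.card {R : Finset (Fin m × Fin n) // NoAllSeeing R ∧
    (∀ i, ¬ IsolatedLeft R i) ∧ (∀ j, ¬ IsolatedRight R j)}

/-!
A bipartite graph is a `0`-`1` matrix, and it is counted exactly when no row and no column of this
matrix is constant. By inclusion–exclusion over the sets `A` of rows and `B` of columns required to
be constant, only the colourings of the lines in `A` and `B` matter: they must agree wherever a
row meets a column, and the entries outside all these lines are free. Hence the bivariate
exponential generating function is a product: one factor is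
`e^{-2x} + e^{-2y} - 1 + 2(e^{-x} - 1)(e^{-y} - 1)` and accounts for the coloured lines, the other
is the bivariate form of `Ψ` and accounts for the free entries. On the diagonal `y = x` the first
factor becomes `(2e^{-x} - 1)²`; the terms with `m = 0` or `n = 0`, which have to be removed, add
up to `2e^{-x} - 1`.
-/

open Finset PowerSeries
open scoped Nat

section Diagonal

lemma sum_antidiagonal_antidiagonal_comm {M : Type*} [AddCommMonoid M] {N : ℕ}
    (f : ℕ → ℕ → ℕ → ℕ → M) :
    ∑ p ∈ antidiagonal N, ∑ b ∈ antidiagonal p.2, ∑ a ∈ antidiagonal p.1, f a.1 a.2 b.1 b.2 =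
      ∑ p ∈ antidiagonal N, ∑ c ∈ antidiagonal p.1, ∑ d ∈ antidiagonal p.2,
        f c.1 d.1 c.2 d.2 := by
  simp only [← sum_product', sum_sigma']
  refine sum_nbij'
    (fun ⟨_, ⟨b₁, b₂⟩, ⟨a₁, a₂⟩⟩ => ⟨(a₁ + b₁, a₂ + b₂), ⟨a₁, b₁⟩, ⟨a₂, b₂⟩⟩)
    (fun ⟨_, ⟨a₁, b₁⟩, ⟨a₂, b₂⟩⟩ => ⟨(a₁ + a₂, b₁ + b₂), ⟨b₁, b₂⟩, ⟨a₁, a₂⟩⟩)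
    ?_ ?_ ?_ ?_ fun _ _ => rfl <;>
  · rintro ⟨⟨m, n⟩, ⟨x₁, x₂⟩, ⟨y₁, y₂⟩⟩ h
    simp only [mem_sigma, mem_product, HasAntidiagonal.mem_antidiagonal] at *
    grind

/-- The substitution `y = x` in a bivariate power series. Series in `x` and `y` are encoded as
elements of `R⟦X⟧⟦X⟧` whose outer variable is `y`, so that `x ^ m * y ^ n` has coefficient
`coeff m (coeff n F)`. -/
noncomputable def evalDiagonal {R : Type*} [Semiring R] : R⟦X⟧⟦X⟧ →+* R⟦X⟧ where
  toFun F := mk fun N => ∑ p ∈ antidiagonal N, coeff p.1 (coeff p.2 F)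
  map_zero' := by ext; simp
  map_one' := by
    ext N
    cases N <;> simp [Nat.sum_antidiagonal_succ', coeff_one]
  map_add' F G := by ext; simp [sum_add_distrib]
  map_mul' F G := by
    ext N
    simp only [coeff_mk, coeff_mul, map_sum, sum_mul_sum]
    exact sum_antidiagonal_antidiagonal_comm
      fun a₁ a₂ b₁ b₂ => coeff a₁ (coeff b₁ F) * coeff a₂ (coeff b₂ G)

variable {R : Type*}

lemma coeff_evalDiagonal [Semiring R] (F : R⟦X⟧⟦X⟧) (N : ℕ) :
    coeff N (evalDiagonal F) = ∑ p ∈ antidiagonal N, coeff p.1 (coeff p.2 F) := by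
  simp [evalDiagonal]

@[simp]
lemma evalDiagonal_C [Semiring R] (f : R⟦X⟧) : evalDiagonal (C f) = f := by
  ext N
  cases N <;> simp [coeff_evalDiagonal, Nat.sum_antidiagonal_succ', coeff_C]

@[simp]
lemma evalDiagonal_map_C [Semiring R] (f : R⟦X⟧) :
    evalDiagonal (PowerSeries.map C f) = f := by
  ext N
  cases N <;> simp [coeff_evalDiagonal, Nat.sum_antidiagonal_succ, coeff_C]

lemma coeff_coeff_C_mul_map_C [Semiring R] (f g : R⟦X⟧) (m n : ℕ) :
    coeff m (coeff n (C f * PowerSeries.map C g)) = coeff m f * coeff n g := by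
  rw [coeff_C_mul, coeff_map, coeff_mul_C]

lemma coeff_evalDiagonal_sub_axes [Ring R] (F : R⟦X⟧⟦X⟧) (N : ℕ) :
    coeff N (evalDiagonal F - constantCoeff F - PowerSeries.map constantCoeff F
        + C (constantCoeff (constantCoeff F))) =
      ∑ p ∈ antidiagonal N with 1 ≤ p.1 ∧ 1 ≤ p.2, coeff p.1 (coeff p.2 F) := by
  set G : R⟦X⟧⟦X⟧ := F - C (constantCoeff F) - PowerSeries.map C (PowerSeries.map constantCoeff F)
    + C (C (constantCoeff (constantCoeff F))) with hG
  have hdiag : evalDiagonal G = evalDiagonal F - constantCoeff F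
      - PowerSeries.map constantCoeff F + C (constantCoeff (constantCoeff F)) := by
    simp [hG]
  rw [← hdiag, coeff_evalDiagonal, sum_filter]
  refine sum_congr rfl ?_
  rintro ⟨_ | m, _ | n⟩ - <;>
    simp [hG, ← coeff_zero_eq_constantCoeff_apply, -coeff_zero_eq_constantCoeff]

end Diagonal

section BivariateEGF

variable {K : Type*} [Field K]

/-- The bivariate exponential generating function `∑ f m n * x ^ m * y ^ n / (m! * n!)`, with `y`
as the outer variable. -/
noncomputable def biEGF (f : ℕ → ℕ → K) : K⟦X⟧⟦X⟧ :=
  mk fun n => mk fun m => f m n / (m ! * n !)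

@[simp]
lemma coeff_coeff_biEGF (f : ℕ → ℕ → K) (m n : ℕ) :
    coeff m (coeff n (biEGF f)) = f m n / (m ! * n !) := by
  simp [biEGF]

variable [CharZero K]

lemma sum_finset_div_factorial_card {α : Type*} [Fintype α] [DecidableEq α] (f : ℕ → ℕ → K) :
    (∑ A : Finset α, f #A #Aᶜ) / (Fintype.card α)! =
      ∑ p ∈ antidiagonal (Fintype.card α), f p.1 p.2 / (p.1 ! * p.2 !) := by
  have hsum := sum_powerset_apply_card (fun a => f a (Fintype.card α - a)) (x := (univ : Finset α))
  rw [powerset_univ, card_univ] at hsum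
  simp only [card_compl, hsum, Nat.sum_antidiagonal_eq_sum_range_succ_mk, sum_div, nsmul_eq_mul]
  refine sum_congr rfl fun a ha => ?_
  rw [Nat.cast_choose K (mem_range_succ_iff.mp ha)]
  have : ((Fintype.card α)! : K) ≠ 0 := mod_cast Nat.factorial_ne_zero _
  field_simp

lemma coeff_coeff_biEGF_mul {α β : Type*} [Fintype α] [DecidableEq α] [Fintype β] [DecidableEq β]
    (f g : ℕ → ℕ → K) :
    coeff (Fintype.card α) (coeff (Fintype.card β) (biEGF f * biEGF g)) =
      (∑ A : Finset α, ∑ B : Finset β, f #A #B * g #Aᶜ #Bᶜ) /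
        ((Fintype.card α)! * (Fintype.card β)!) := by
  have hβ (a a' : ℕ) := sum_finset_div_factorial_card (α := β) fun b b' => f a b * g a' b'
  have hα := sum_finset_div_factorial_card (α := α) fun a a' =>
    (∑ B : Finset β, f a #B * g a' #Bᶜ) / (Fintype.card β)!
  rw [← div_div, div_right_comm, sum_div, hα]
  simp only [hβ, coeff_mul, map_sum, coeff_coeff_biEGF]
  rw [sum_comm]
  refine sum_congr rfl fun p _ => ?_
  rw [sum_div]
  refine sum_congr rfl fun r _ => ?_
  simp only [div_eq_mul_inv, mul_inv]
  ring

end BivariateEGF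

section InclusionExclusion

lemma card_forall_not_and_forall_not {Ω α β : Type*} [Finite Ω] [Fintype α] [Fintype β]
    (P : α → Ω → Prop) (Q : β → Ω → Prop) :
    (Nat.card {ω // (∀ i, ¬P i ω) ∧ ∀ j, ¬Q j ω} : ℤ) =
      ∑ A : Finset α, ∑ B : Finset β,
        (-1) ^ (#A + #B) * (Nat.card {ω // (∀ i ∈ A, P i ω) ∧ ∀ j ∈ B, Q j ω} : ℤ) := by
  classical
  have := Fintype.ofFinite Ω
  let S : α ⊕ β → Finset Ω := Sum.elim (fun i => univ.filter (P i)) (fun j => univ.filter (Q j))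
  have hnone : univ.inf (fun s => (S s)ᶜ) = univ.filter fun ω => (∀ i, ¬P i ω) ∧ ∀ j, ¬Q j ω := by
    ext ω
    simp [S, mem_inf]
  have hall (A : Finset α) (B : Finset β) :
      (A.disjSum B).inf S = univ.filter fun ω => (∀ i ∈ A, P i ω) ∧ ∀ j ∈ B, Q j ω := by
    ext ω
    simp [S, mem_inf]
  simp only [Nat.card_eq_fintype_card, Fintype.card_subtype, ← hnone, ← hall]
  rw [inclusion_exclusion_card_inf_compl, powerset_univ, ← sumEquiv.symm.toEquiv.sum_comp,
    Fintype.sum_prod_type]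
  simp

end InclusionExclusion

section ConstantLines

variable {α β κ : Type*}

/-- All values of `f` coincide. For the rows `M i` and the columns `fun i => M i j` of a `0`-`1`
matrix this says that a vertex is all-seeing or isolated. -/
def IsConstant (f : α → κ) : Prop :=
  ∀ x y, f x = f y

/-- No row and no column of the matrix `M` is constant. -/
def NoConstantLine (M : α → β → κ) : Prop :=
  (∀ i, ¬IsConstant (M i)) ∧ ∀ j, ¬IsConstant fun i => M i j

/-- The number of ways to assign one of `q` colours to each of `a` rows and `b` columns of a matrix
such that every one of these rows has the same colour as every one of these columns. -/
def lineColouringCount (q : ℕ) : ℕ → ℕ → ℕ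
  | a, 0 => q ^ a
  | 0, b + 1 => q ^ (b + 1)
  | _ + 1, _ + 1 => q

lemma card_agreeing_functions [Fintype α] [Fintype β] [Fintype κ] :
    Nat.card {w : (α → κ) × (β → κ) // ∀ i j, w.1 i = w.2 j} =
      lineColouringCount (Fintype.card κ) (Fintype.card α) (Fintype.card β) := by
  rcases isEmpty_or_nonempty β with hβ | hβ
  · simp [lineColouringCount, Nat.card_fun]
  rcases isEmpty_or_nonempty α with hα | hα
  · obtain ⟨b, hb⟩ := Nat.exists_eq_succ_of_ne_zero (Fintype.card_ne_zero (α := β))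
    simp [hb, lineColouringCount, Nat.card_fun]
  · have e : κ ≃ {w : (α → κ) × (β → κ) // ∀ i j, w.1 i = w.2 j} :=
      { toFun c := ⟨(fun _ => c, fun _ => c), fun _ _ => rfl⟩
        invFun w := w.1.1 (Classical.arbitrary α)
        left_inv _ := rfl
        right_inv := by
          rintro ⟨⟨u, v⟩, h⟩
          refine Subtype.ext (Prod.ext (funext fun i => ?_) (funext fun j => ?_))
          · exact (h _ (Classical.arbitrary β)).trans (h i _).symm
          · exact h _ j }
    obtain ⟨a, ha⟩ := Nat.exists_eq_succ_of_ne_zero (Fintype.card_ne_zero (α := α))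
    obtain ⟨b, hb⟩ := Nat.exists_eq_succ_of_ne_zero (Fintype.card_ne_zero (α := β))
    simp [← Nat.card_congr e, ha, hb, lineColouringCount]

section Glue

variable {A : Finset α} {B : Finset β} [DecidableEq α] [DecidableEq β]

/-- The matrix with colour `u i` along each row `i ∈ A`, colour `v j` along each column `j ∈ B`, and
entries `N` elsewhere. Rows take precedence, which is harmless when `u` and `v` agree. -/
def glueLines (u : A → κ) (v : B → κ) (N : {i // i ∉ A} → {j // j ∉ B} → κ) (i : α) (j : β) : κ :=
  if hi : i ∈ A then u ⟨i, hi⟩ else if hj : j ∈ B then v ⟨j, hj⟩ else N ⟨i, hi⟩ ⟨j, hj⟩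

variable {u : A → κ} {v : B → κ} {N : {i // i ∉ A} → {j // j ∉ B} → κ}

lemma glueLines_of_mem_left {i : α} (hi : i ∈ A) (j : β) : glueLines u v N i j = u ⟨i, hi⟩ := by
  simp [glueLines, hi]

lemma glueLines_of_mem_right (h : ∀ i j, u i = v j) (i : α) {j : β} (hj : j ∈ B) :
    glueLines u v N i j = v ⟨j, hj⟩ := by
  by_cases hi : i ∈ A <;> simp [glueLines, hi, hj, h _ ⟨j, hj⟩]

lemma glueLines_of_notMem (i : {i // i ∉ A}) (j : {j // j ∉ B}) :
    glueLines u v N i j = N i j := by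
  simp [glueLines, i.2, j.2]

end Glue

/-- A matrix that is constant along the rows in `A` and the columns in `B` amounts to the colours of
these lines together with its entries outside them. -/
noncomputable def constantLinesEquiv [DecidableEq α] [DecidableEq β] [Nonempty α] [Nonempty β]
    (A : Finset α) (B : Finset β) :
    {M : α → β → κ // (∀ i ∈ A, IsConstant (M i)) ∧ ∀ j ∈ B, IsConstant fun i => M i j} ≃
      {w : (A → κ) × (B → κ) // ∀ i j, w.1 i = w.2 j} × ({i // i ∉ A} → {j // j ∉ B} → κ) where
  toFun M :=
    (⟨(fun i => M.1 i (Classical.arbitrary β), fun j => M.1 (Classical.arbitrary α) j),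
        fun i j => (M.2.1 i i.2 _ _).trans (M.2.2 j j.2 _ _)⟩,
      fun i j => M.1 i j)
  invFun w :=
    ⟨glueLines w.1.1.1 w.1.1.2 w.2,
      fun i hi j j' => by simp only [glueLines_of_mem_left hi],
      fun j hj i i' => by simp only [glueLines_of_mem_right w.1.2 _ hj]⟩
  left_inv := by
    rintro ⟨M, hrow, hcol⟩
    ext i j
    by_cases hi : i ∈ A
    · simpa [glueLines, hi] using hrow i hi _ j
    · by_cases hj : j ∈ B
      · simpa [glueLines, hi, hj] using hcol j hj _ i
      · simp [glueLines, hi, hj]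
  right_inv := by
    rintro ⟨⟨⟨u, v⟩, h⟩, N⟩
    refine Prod.ext (Subtype.ext (Prod.ext ?_ ?_)) ?_
    · exact funext fun i => glueLines_of_mem_left i.2 _
    · exact funext fun j => glueLines_of_mem_right h _ j.2
    · exact funext₂ glueLines_of_notMem

lemma card_constant_on [Fintype α] [Fintype β] [Fintype κ] [DecidableEq α] [DecidableEq β]
    [Nonempty α] [Nonempty β] (A : Finset α) (B : Finset β) :
    Nat.card {M : α → β → κ // (∀ i ∈ A, IsConstant (M i)) ∧ ∀ j ∈ B, IsConstant fun i => M i j} =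
      lineColouringCount (Fintype.card κ) #A #B * Fintype.card κ ^ (#Aᶜ * #Bᶜ) := by
  rw [Nat.card_congr (constantLinesEquiv A B), Nat.card_prod, card_agreeing_functions]
  simp [← pow_mul, mul_comm, card_compl]

lemma card_noConstantLine [Fintype α] [Fintype β] [Fintype κ] [DecidableEq α] [DecidableEq β]
    [Nonempty α] [Nonempty β] :
    (Nat.card {M : α → β → κ // NoConstantLine M} : ℤ) =
      ∑ A : Finset α, ∑ B : Finset β,
        (-1) ^ (#A + #B) * (lineColouringCount (Fintype.card κ) #A #B : ℤ) *
          Fintype.card κ ^ (#Aᶜ * #Bᶜ) := by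
  simp only [NoConstantLine, card_forall_not_and_forall_not, card_constant_on, Nat.cast_mul,
    Nat.cast_pow, mul_assoc]

end ConstantLines

section Series

lemma coeff_expNeg (a : ℕ) : coeff a ExpNeg = (-1) ^ a / a ! :=
  coeff_mk _ _

lemma constantCoeff_expNeg : constantCoeff ExpNeg = 1 := by
  simp [← coeff_zero_eq_constantCoeff_apply, -coeff_zero_eq_constantCoeff, coeff_expNeg]

lemma expNeg_eq_evalNegHom_exp : ExpNeg = evalNegHom (exp ℚ) := by
  ext k
  simp [coeff_expNeg, evalNegHom, coeff_exp, div_eq_mul_inv]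

lemma expNeg_mul_exp : ExpNeg * exp ℚ = 1 := by
  rw [expNeg_eq_evalNegHom_exp, mul_comm, exp_mul_exp_neg_eq_one]

lemma coeff_expNeg_pow (q a : ℕ) : coeff a (ExpNeg ^ q) = (-q : ℚ) ^ a / a ! := by
  rw [expNeg_eq_evalNegHom_exp, ← map_pow, exp_pow_eq_rescale_exp]
  simp [evalNegHom, coeff_exp, neg_pow (q : ℚ), div_eq_mul_inv, mul_assoc]

/-- The bivariate exponential generating function of the coloured lines, with the sign they carry in
the inclusion–exclusion formula. -/
noncomputable def lineColouringSeries (q : ℕ) : ℚ⟦X⟧⟦X⟧ :=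
  biEGF fun a b => (-1) ^ (a + b) * lineColouringCount q a b

/-- The bivariate exponential generating function of all matrices with entries in `q` colours; for
`q = 2` its diagonal is `Psi`. -/
noncomputable def matrixSeries (q : ℕ) : ℚ⟦X⟧⟦X⟧ :=
  biEGF fun m n => (q : ℚ) ^ (m * n)

lemma lineColouringSeries_eq (q : ℕ) :
    lineColouringSeries q =
      C (ExpNeg ^ q) + PowerSeries.map C (ExpNeg ^ q) - 1
        + C (C (q : ℚ) * (ExpNeg - 1)) * PowerSeries.map C (ExpNeg - 1) := by
  ext b a
  rw [lineColouringSeries, coeff_coeff_biEGF, map_add, map_add, coeff_coeff_C_mul_map_C,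
    coeff_C_mul]
  simp only [map_sub, map_add, coeff_map, coeff_C, coeff_one, coeff_expNeg]
  have hneg (k : ℕ) : (-q : ℚ) ^ k = (-1) ^ k * q ^ k := neg_pow _ _
  rcases a with _ | a <;> rcases b with _ | b
  · simp [lineColouringCount, constantCoeff_expNeg]
  · simp [lineColouringCount, hneg, coeff_expNeg_pow]
  · simp [lineColouringCount, hneg, coeff_expNeg_pow]
  · simp [lineColouringCount]
    field_simp
    ring

lemma evalDiagonal_lineColouringSeries (q : ℕ) :
    evalDiagonal (lineColouringSeries q) = 2 * ExpNeg ^ q - 1 + q * (ExpNeg - 1) ^ 2 := by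
  simp only [lineColouringSeries_eq, map_add, map_sub, map_mul, map_one, evalDiagonal_C,
    evalDiagonal_map_C, map_natCast]
  ring

lemma constantCoeff_lineColouringSeries (q : ℕ) :
    constantCoeff (lineColouringSeries q) = ExpNeg ^ q := by
  have hE : constantCoeff (PowerSeries.map (C (R := ℚ)) ExpNeg) = 1 := by
    simp [← coeff_zero_eq_constantCoeff_apply, -coeff_zero_eq_constantCoeff, coeff_expNeg]
  simp [lineColouringSeries_eq, hE]

lemma map_constantCoeff_lineColouringSeries (q : ℕ) :
    PowerSeries.map constantCoeff (lineColouringSeries q) = ExpNeg ^ q := by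
  have hE : PowerSeries.map constantCoeff (PowerSeries.map (C (R := ℚ)) ExpNeg) = ExpNeg := by
    ext; simp
  simp [lineColouringSeries_eq, hE, constantCoeff_expNeg]

lemma constantCoeff_matrixSeries (q : ℕ) : constantCoeff (matrixSeries q) = exp ℚ := by
  ext m
  simp [matrixSeries, ← coeff_zero_eq_constantCoeff_apply, -coeff_zero_eq_constantCoeff, coeff_exp]

lemma map_constantCoeff_matrixSeries (q : ℕ) :
    PowerSeries.map constantCoeff (matrixSeries q) = exp ℚ := by
  ext n
  simp [matrixSeries, ← coeff_zero_eq_constantCoeff_apply, -coeff_zero_eq_constantCoeff, coeff_exp]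

lemma evalDiagonal_matrixSeries_two : evalDiagonal (matrixSeries 2) = Psi := by
  ext N
  simp [coeff_evalDiagonal, matrixSeries, Psi]

end Series

/-- The number of `m × n` matrices with entries in `κ` and without a constant row or column. -/
noncomputable def noConstantLineCount (κ : Type*) (m n : ℕ) : ℕ :=
  Nat.card {M : Fin m → Fin n → κ // NoConstantLine M}

lemma coeff_coeff_lineColouringSeries_mul_matrixSeries (κ : Type*) [Fintype κ] {m n : ℕ}
    (hm : 1 ≤ m) (hn : 1 ≤ n) :
    coeff m (coeff n (lineColouringSeries (Fintype.card κ) * matrixSeries (Fintype.card κ))) =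
      (noConstantLineCount κ m n : ℚ) / (m ! * n !) := by
  have := Fin.pos_iff_nonempty.mp hm
  have := Fin.pos_iff_nonempty.mp hn
  have hcount := congrArg (Int.cast : ℤ → ℚ)
    (card_noConstantLine (α := Fin m) (β := Fin n) (κ := κ))
  have hcoeff := coeff_coeff_biEGF_mul (α := Fin m) (β := Fin n)
    (fun a b => (-1) ^ (a + b) * (lineColouringCount (Fintype.card κ) a b : ℚ))
    (fun m n => (Fintype.card κ : ℚ) ^ (m * n))
  push_cast at hcount
  simp only [Fintype.card_fin, ← hcount] at hcoeff
  exact hcoeff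

theorem egf_noIsoNoIso_general (κ : Type*) [Fintype κ] :
    egf2 (noConstantLineCount κ) =
      (2 * ExpNeg ^ Fintype.card κ - 1 + Fintype.card κ * (ExpNeg - 1) ^ 2)
          * evalDiagonal (matrixSeries (Fintype.card κ))
        - (2 * ExpNeg ^ Fintype.card κ * exp ℚ - 1) := by
  set q := Fintype.card κ
  set F := lineColouringSeries q * matrixSeries q with hF
  have hegf : egf2 (noConstantLineCount κ) = evalDiagonal F - constantCoeff F
      - PowerSeries.map constantCoeff F + C (constantCoeff (constantCoeff F)) := by
    ext N
    rw [coeff_evalDiagonal_sub_axes, egf2, coeff_mk]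
    refine sum_congr rfl fun p hp => ?_
    obtain ⟨-, hm, hn⟩ := mem_filter.mp hp
    exact (coeff_coeff_lineColouringSeries_mul_matrixSeries κ hm hn).symm
  simp only [hegf, hF, map_mul, evalDiagonal_lineColouringSeries,
    constantCoeff_lineColouringSeries, map_constantCoeff_lineColouringSeries,
    constantCoeff_matrixSeries, map_constantCoeff_matrixSeries, map_pow, constantCoeff_expNeg,
    constantCoeff_exp, map_one]
  ring

/-- The indicator matrix of a set of edges. -/
def edgeMatrixEquiv (α β : Type*) [Fintype α] [Fintype β] [DecidableEq α] [DecidableEq β] :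
    Finset (α × β) ≃ (α → β → Bool) where
  toFun R i j := decide ((i, j) ∈ R)
  invFun M := univ.filter fun p => M p.1 p.2
  left_inv R := by ext; simp
  right_inv M := by ext; simp

lemma isConstant_bool_iff {α : Type*} {f : α → Bool} :
    IsConstant f ↔ (∀ x, f x = true) ∨ ∀ x, f x = false := by
  refine ⟨fun h => ?_, by rintro (h | h) x y <;> simp [h]⟩
  by_contra! hne
  obtain ⟨⟨x, hx⟩, y, hy⟩ := hne
  simp_all [h x y]

lemma bNoIsoNoIso_eq_noConstantLineCount : bNoIsoNoIso = noConstantLineCount Bool := by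
  funext m n
  refine Nat.card_congr ((edgeMatrixEquiv _ _).subtypeEquiv fun R => ?_)
  simp only [NoAllSeeing, IsolatedLeft, IsolatedRight, NoConstantLine, isConstant_bool_iff,
    edgeMatrixEquiv, Equiv.coe_fn_mk, decide_eq_true_eq, decide_eq_false_iff_not, not_or,
    forall_and]
  tauto

theorem egf_noIsoNoIso :
    egf2 bNoIsoNoIso = (2 * ExpNeg - 1) * ((2 * ExpNeg - 1) * Psi - 1) := by
  rw [bNoIsoNoIso_eq_noConstantLineCount, egf_noIsoNoIso_general, Fintype.card_bool,
    evalDiagonal_matrixSeries_two, Nat.cast_ofNat]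
  linear_combination -2 * ExpNeg * expNeg_mul_exp
end

section
/- Let b(m,n) denote the number of bipartite graphs on [m] ⊎ [n] with no all-seeing vertex on either side, at least one isolated vertex in [m], and no isolated vertex in [n]. Then, as formal power series in x over ℚ, Σ_{m,n ≥ 1} b(m,n) · x^{m+n}/(m! n!) = (1 − e^{−x})·((2e^{−x} − 1)·Ψ(x) − 1), where Ψ(x) = Σ_{m,n ≥ 0} 2^{mn} x^{m+n}/(m! n!) and e^{−x} is the power series Σ_{k ≥ 0} (−1)^k x^k/k!. -/
/-- graphs with no all-seeing vertex, at least one isolated vertex in `[m]`,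
and no isolated vertex in `[n]`. -/
noncomputable def bIsoNoIso (m n : ℕ) : ℕ :=
  Nat.card {R : Finset (Fin m × Fin n) // NoAllSeeing R ∧
    (∃ i, IsolatedLeft R i) ∧ (∀ j, ¬ IsolatedRight R j)}

/-!
An isolated vertex in `[m]` rules out all-seeing vertices in `[n]`, and an all-seeing vertex in
`[m]` rules out isolated vertices in `[n]`. So the graphs to be counted are those with an isolated
vertex in `[m]` and none in `[n]`, minus those with both an isolated and an all-seeing vertex in
`[m]`. Write `E = e^{-x}`. By the binomial theorem, and by inclusion–exclusion over the isolated
vertices, multiplying by `E` forbids isolated vertices on one side: graphs without isolated vertices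
in `[n]` have egf `E Ψ`, and those without any isolated vertex have egf `E² Ψ`. The first family
thus has egf `E Ψ - E² Ψ`. The second has `2^{mn} - 2 (2^n - 1)^m + N^m` members, where `N` is the
number of nonempty proper subsets of `[n]`; as `N = 2^n - 2` except that `N = 0` for `n = 0`, its
egf is `Ψ - 2 E Ψ + (E² Ψ + 1 - E)`. The difference of the two factors as claimed.
-/

open Finset

section Counting

theorem card_filter_forall_equiv {ι σ γ : Type*} [Fintype ι] [Fintype σ] [Fintype γ]
    (e : γ ≃ (ι → σ)) (P : σ → Prop) [DecidablePred P] :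
    #{x | ∀ i, P (e x i)} = #{s | P s} ^ Fintype.card ι := by
  classical
  calc #{x | ∀ i, P (e x i)}
      = #(Fintype.piFinset fun _ : ι ↦ ({s | P s} : Finset σ)) := card_equiv e fun x ↦ by simp
    _ = #{s | P s} ^ Fintype.card ι := by simp

theorem card_filter_forall_not {ι γ : Type*} [Fintype ι] (s : Finset γ)
    (p : ι → γ → Prop) [∀ i, DecidablePred (p i)] :
    (#{x ∈ s | ∀ i, ¬ p i x} : ℤ) =
      ∑ t : Finset ι, (-1) ^ #t * (#{x ∈ s | ∀ i ∈ t, p i x} : ℤ) := by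
  have := Classical.decEq γ
  have h := inclusion_exclusion_card_inf_compl univ fun i ↦ ({x : s | p i x} : Finset s)
  have hcard (q : γ → Prop) [DecidablePred q] : #{x : s | q x} = #{x ∈ s | q x} := by
    rw [← card_map (Function.Embedding.subtype _)]
    congr 1
    ext x
    simp [and_comm]
  have hinf (t : Finset ι) : t.inf (fun i ↦ ({x : s | p i x} : Finset s)) =
      ({x : s | ∀ i ∈ t, p i x} : Finset s) := by
    ext x; simp [mem_inf]
  have hinf_compl : univ.inf (fun i ↦ ({x : s | p i x} : Finset s)ᶜ) =
      ({x : s | ∀ i, ¬ p i x} : Finset s) := by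
    ext x; simp [mem_inf]
  rw [hinf_compl, hcard fun x ↦ ∀ i, ¬ p i x, powerset_univ] at h
  exact h.trans <| sum_congr rfl fun t _ ↦ by rw [hinf, hcard fun x ↦ ∀ i ∈ t, p i x]

section Subsets

variable {α : Type*} [Fintype α]

theorem card_filter_subset_nonempty [DecidableEq α] (t : Finset α) :
    #{s | s ⊆ t ∧ s.Nonempty} = 2 ^ #t - 1 := by
  have : ({s | s ⊆ t ∧ s.Nonempty} : Finset (Finset α)) = t.powerset.erase ∅ := by
    ext s; simp [nonempty_iff_ne_empty, and_comm]
  rw [this, card_erase_of_mem (empty_mem_powerset t), card_powerset]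

theorem card_filter_nonempty : #{s : Finset α | s.Nonempty} = 2 ^ Fintype.card α - 1 := by
  classical
  simpa using card_filter_subset_nonempty (univ : Finset α)

theorem card_filter_ne_univ [DecidableEq α] :
    #{s : Finset α | s ≠ univ} = 2 ^ Fintype.card α - 1 := by
  rw [filter_ne', card_erase_of_mem (mem_univ _), card_univ, Fintype.card_finset]

-- For empty `α` the truncated difference `1 - 2 = 0` is the correct count.
theorem card_filter_ne_univ_nonempty [DecidableEq α] :
    #{s : Finset α | s ≠ univ ∧ s.Nonempty} = 2 ^ Fintype.card α - 2 := by
  have : ({s | s ≠ univ ∧ s.Nonempty} : Finset (Finset α)) = (univ.erase ∅).erase univ := by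
    ext s; simp [nonempty_iff_ne_empty]
  rw [this]
  rcases isEmpty_or_nonempty α with _ | _
  · simp [Subsingleton.elim _ ∅]
  · rw [card_erase_of_mem (by simp [univ_nonempty.ne_empty]), card_erase_of_mem (mem_univ _),
      card_univ, Fintype.card_finset, Nat.sub_sub]

end Subsets

variable {α β : Type*} [Fintype α] [Fintype β] [DecidableEq α] [DecidableEq β]

/-- A bipartite graph on `α ⊎ β` as the family of neighbourhoods of the vertices in `α`. -/
def leftNeighbors : Finset (α × β) ≃ (α → Finset β) where
  toFun R a := {b | (a, b) ∈ R}
  invFun f := {p | p.2 ∈ f p.1}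
  left_inv R := by ext; simp
  right_inv f := by ext; simp

@[simp]
theorem mem_leftNeighbors {R : Finset (α × β)} {a : α} {b : β} :
    b ∈ leftNeighbors R a ↔ (a, b) ∈ R := by
  simp [leftNeighbors]

/-- A bipartite graph on `α ⊎ β` as the family of neighbourhoods of the vertices in `β`. -/
def rightNeighbors : Finset (α × β) ≃ (β → Finset α) :=
  (Equiv.prodComm α β).finsetCongr.trans leftNeighbors

@[simp]
theorem mem_rightNeighbors {R : Finset (α × β)} {a : α} {b : β} :
    a ∈ rightNeighbors R b ↔ (a, b) ∈ R := by
  simp [rightNeighbors]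

variable (α β)

/-- The bipartite graphs on `α ⊎ β` without isolated vertices in `α`. -/
def noIsolatedLeft : Finset (Finset (α × β)) := {R | ∀ a, ∃ b, (a, b) ∈ R}

/-- The bipartite graphs on `α ⊎ β` without isolated vertices in `β`. -/
def noIsolatedRight : Finset (Finset (α × β)) := {R | ∀ b, ∃ a, (a, b) ∈ R}

/-- The bipartite graphs on `α ⊎ β` without all-seeing vertices in `α`. -/
def noAllSeeingLeft : Finset (Finset (α × β)) := {R | ∀ a, ∃ b, (a, b) ∉ R}

variable {α β} {R : Finset (α × β)}

@[simp]
theorem mem_noIsolatedLeft : R ∈ noIsolatedLeft α β ↔ ∀ a, ∃ b, (a, b) ∈ R := by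
  simp [noIsolatedLeft]

@[simp]
theorem mem_noIsolatedRight : R ∈ noIsolatedRight α β ↔ ∀ b, ∃ a, (a, b) ∈ R := by
  simp [noIsolatedRight]

@[simp]
theorem mem_noAllSeeingLeft : R ∈ noAllSeeingLeft α β ↔ ∀ a, ∃ b, (a, b) ∉ R := by
  simp [noAllSeeingLeft]

variable (α β)

theorem compl_noAllSeeingLeft_subset_noIsolatedRight :
    (noAllSeeingLeft α β)ᶜ ⊆ noIsolatedRight α β := by
  intro R hR
  obtain ⟨a, ha⟩ : ∃ a, ∀ b, (a, b) ∈ R := by simpa using hR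
  exact mem_noIsolatedRight.mpr fun b ↦ ⟨a, ha b⟩

theorem noIsolatedRight_sdiff_noIsolatedLeft_sdiff_noAllSeeingLeft :
    (noIsolatedRight α β \ noIsolatedLeft α β) \ noAllSeeingLeft α β =
      (noAllSeeingLeft α β ∪ noIsolatedLeft α β)ᶜ := by
  rw [sdiff_sdiff_comm, sdiff_eq_inter_compl _ (noAllSeeingLeft α β), inter_eq_right.mpr
    (compl_noAllSeeingLeft_subset_noIsolatedRight α β), sdiff_eq_inter_compl, compl_union]

theorem card_noIsolatedLeft :
    #(noIsolatedLeft α β) = (2 ^ Fintype.card β - 1) ^ Fintype.card α := by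
  rw [← card_filter_nonempty, ← card_filter_forall_equiv leftNeighbors]
  simp [noIsolatedLeft, Finset.Nonempty]

theorem card_noAllSeeingLeft :
    #(noAllSeeingLeft α β) = (2 ^ Fintype.card β - 1) ^ Fintype.card α := by
  rw [← card_filter_ne_univ, ← card_filter_forall_equiv leftNeighbors]
  simp [noAllSeeingLeft, eq_univ_iff_forall]

theorem card_noAllSeeingLeft_inter_noIsolatedLeft :
    #(noAllSeeingLeft α β ∩ noIsolatedLeft α β) =
      (2 ^ Fintype.card β - 2) ^ Fintype.card α := by
  rw [← card_filter_ne_univ_nonempty, ← card_filter_forall_equiv leftNeighbors]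
  simp [noAllSeeingLeft, noIsolatedLeft, eq_univ_iff_forall, Finset.Nonempty, forall_and,
    filter_and]

theorem card_compl_noAllSeeingLeft_union_noIsolatedLeft :
    #(noAllSeeingLeft α β ∪ noIsolatedLeft α β)ᶜ + 2 * (2 ^ Fintype.card β - 1) ^ Fintype.card α =
      2 ^ (Fintype.card α * Fintype.card β) + (2 ^ Fintype.card β - 2) ^ Fintype.card α := by
  have hunion := card_union_add_card_inter (noAllSeeingLeft α β) (noIsolatedLeft α β)
  rw [card_noAllSeeingLeft_inter_noIsolatedLeft, card_noAllSeeingLeft, card_noIsolatedLeft]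
    at hunion
  have htotal := card_add_card_compl (noAllSeeingLeft α β ∪ noIsolatedLeft α β)
  rw [Fintype.card_finset, Fintype.card_prod] at htotal
  omega

variable {α} in
theorem card_filter_noIsolatedRight_forall_isolated (t : Finset α) :
    #{R ∈ noIsolatedRight α β | ∀ a ∈ t, ∀ b, (a, b) ∉ R} =
      (2 ^ (Fintype.card α - #t) - 1) ^ Fintype.card β := by
  rw [← card_compl, ← card_filter_subset_nonempty, ← card_filter_forall_equiv rightNeighbors,
    noIsolatedRight, filter_filter]
  congr! 3 with R
  simp only [subset_iff, mem_rightNeighbors, mem_compl, Finset.Nonempty, forall_and]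
  grind

theorem card_noIsolatedRight :
    #(noIsolatedRight α β) = (2 ^ Fintype.card α - 1) ^ Fintype.card β := by
  simpa using card_filter_noIsolatedRight_forall_isolated β (∅ : Finset α)

theorem card_noIsolatedRight_inter_noIsolatedLeft :
    (#(noIsolatedRight α β ∩ noIsolatedLeft α β) : ℤ) =
      ∑ p ∈ antidiagonal (Fintype.card α), ((Fintype.card α).choose p.1 : ℤ) *
        (-1) ^ p.1 * (2 ^ p.2 - 1) ^ Fintype.card β := by
  have hinter : noIsolatedRight α β ∩ noIsolatedLeft α β =
      {R ∈ noIsolatedRight α β | ∀ a, ¬ ∀ b, (a, b) ∉ R} := by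
    ext; simp
  calc (#(noIsolatedRight α β ∩ noIsolatedLeft α β) : ℤ)
      = ∑ t : Finset α, (-1) ^ #t * (2 ^ (Fintype.card α - #t) - 1) ^ Fintype.card β := by
        rw [hinter, card_filter_forall_not]
        refine sum_congr rfl fun t _ ↦ congrArg _ ?_
        convert congrArg (Nat.cast (R := ℤ)) (card_filter_noIsolatedRight_forall_isolated β t)
        simp
    _ = ∑ k ∈ range (Fintype.card α + 1), (Fintype.card α).choose k •
          ((-1) ^ k * (2 ^ (Fintype.card α - k) - 1) ^ Fintype.card β) := by
        rw [← powerset_univ, ← card_univ]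
        exact sum_powerset_apply_card fun k ↦
          (-1 : ℤ) ^ k * (2 ^ (#(univ : Finset α) - k) - 1) ^ Fintype.card β
    _ = _ := by
        rw [Nat.sum_antidiagonal_eq_sum_range_succ_mk]
        simp only [nsmul_eq_mul, mul_assoc]

end Counting

section DoubleEgf

variable {K : Type*} [Field K]

/-- The exponential generating function `Σ_{m,n ≥ 0} f(m,n) x^{m+n}/(m! n!)` of a double sequence,
in a single variable `x`. -/
def doubleEgf : (ℕ → ℕ → K) →ₗ[K] PowerSeries K where
  toFun f := PowerSeries.mk fun N ↦
    ∑ p ∈ antidiagonal N, f p.1 p.2 / (p.1.factorial * p.2.factorial)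
  map_add' f g := by ext; simp [add_div, sum_add_distrib]
  map_smul' c f := by ext; simp [mul_sum, mul_div_assoc]

theorem coeff_doubleEgf (f : ℕ → ℕ → K) (N : ℕ) :
    PowerSeries.coeff N (doubleEgf f) =
      ∑ p ∈ antidiagonal N, f p.1 p.2 / (p.1.factorial * p.2.factorial) := by
  simp [doubleEgf]

theorem doubleEgf_swap (f : ℕ → ℕ → K) : doubleEgf (Function.swap f) = doubleEgf f := by
  ext N
  rw [coeff_doubleEgf, coeff_doubleEgf, ← Nat.sum_antidiagonal_swap]
  simp [mul_comm]

theorem doubleEgf_ite_right_eq_zero (a : ℕ → K) :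
    doubleEgf (fun m n ↦ if n = 0 then a m else 0) = PowerSeries.mk fun k ↦ a k / k.factorial := by
  ext N
  rw [coeff_doubleEgf, PowerSeries.coeff_mk, sum_eq_single (N, 0)]
  · simp
  · rintro ⟨m, n⟩ hmn hne
    have : n ≠ 0 := by
      rintro rfl
      simp_all
    simp [this]
  · simp

theorem mk_mul_doubleEgf [CharZero K] (a : ℕ → K) (f : ℕ → ℕ → K) :
    (PowerSeries.mk fun k ↦ a k / k.factorial) * doubleEgf f =
      doubleEgf fun m n ↦ ∑ p ∈ antidiagonal m, m.choose p.1 * a p.1 * f p.2 n := by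
  have sum_div_factorial (m n : ℕ) : (∑ p ∈ antidiagonal m, m.choose p.1 * a p.1 * f p.2 n) /
      (m.factorial * n.factorial) = ∑ p ∈ antidiagonal m,
        a p.1 / p.1.factorial * (f p.2 n / (p.2.factorial * n.factorial)) := by
    rw [sum_div]
    refine sum_congr rfl fun ⟨i, j⟩ hij ↦ ?_
    obtain rfl := mem_antidiagonal.mp hij
    have := (i + j).factorial_ne_zero
    rw [Nat.cast_add_choose]
    field_simp
  ext N
  simp only [PowerSeries.coeff_mul, coeff_doubleEgf, PowerSeries.coeff_mk, sum_div_factorial,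
    mul_sum, sum_sigma']
  refine sum_nbij' (fun ⟨⟨i, _⟩, ⟨j, n⟩⟩ ↦ ⟨(i + j, n), (i, j)⟩)
    (fun ⟨⟨_, n⟩, ⟨i, j⟩⟩ ↦ ⟨(i, j + n), (j, n)⟩) ?_ ?_ ?_ ?_ ?_ <;>
    simp +contextual [Sigma.forall] <;> omega

end DoubleEgf

theorem doubleEgf_two_pow : doubleEgf (fun m n ↦ 2 ^ (m * n)) = Psi := by
  ext; simp [coeff_doubleEgf, Psi]

theorem expNeg_mul_doubleEgf_pow (c : ℕ → ℚ) :
    ExpNeg * doubleEgf (fun m n ↦ c n ^ m) = doubleEgf fun m n ↦ (c n - 1) ^ m := by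
  rw [ExpNeg, mk_mul_doubleEgf]
  congr! 3 with m n
  rw [sub_eq_neg_add, (Commute.all _ _).add_pow']
  simp [mul_assoc]

theorem expNeg_mul_Psi : ExpNeg * Psi = doubleEgf fun m n ↦ (2 ^ n - 1) ^ m := by
  rw [← expNeg_mul_doubleEgf_pow, ← doubleEgf_two_pow]
  simp only [← pow_mul, mul_comm]

theorem expNeg_sq_mul_Psi : ExpNeg ^ 2 * Psi = doubleEgf fun m n ↦ (2 ^ n - 2) ^ m := by
  rw [sq, mul_assoc, expNeg_mul_Psi, expNeg_mul_doubleEgf_pow]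
  norm_num [sub_sub]

theorem expNeg_mul_Psi_swap : ExpNeg * Psi = doubleEgf fun m n ↦ (2 ^ m - 1) ^ n := by
  rw [expNeg_mul_Psi, ← doubleEgf_swap, Function.swap_def]

theorem doubleEgf_card_noIsolatedRight :
    doubleEgf (fun m n ↦ (#(noIsolatedRight (Fin m) (Fin n)) : ℚ)) = ExpNeg * Psi := by
  rw [expNeg_mul_Psi_swap]
  congr! 3 with m n
  simp [card_noIsolatedRight]

theorem doubleEgf_card_noIsolatedRight_inter_noIsolatedLeft :
    doubleEgf (fun m n ↦
        (#(noIsolatedRight (Fin m) (Fin n) ∩ noIsolatedLeft (Fin m) (Fin n)) : ℚ)) =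
      ExpNeg ^ 2 * Psi := by
  rw [sq, mul_assoc, expNeg_mul_Psi_swap, ExpNeg, mk_mul_doubleEgf]
  congr! 3 with m n
  have h := card_noIsolatedRight_inter_noIsolatedLeft (Fin m) (Fin n)
  rw [Fintype.card_fin, Fintype.card_fin] at h
  exact_mod_cast congrArg (Int.cast (R := ℚ)) h

theorem doubleEgf_card_noIsolatedRight_sdiff_noIsolatedLeft :
    doubleEgf (fun m n ↦
        (#(noIsolatedRight (Fin m) (Fin n) \ noIsolatedLeft (Fin m) (Fin n)) : ℚ)) =
      ExpNeg * Psi - ExpNeg ^ 2 * Psi := by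
  rw [← doubleEgf_card_noIsolatedRight, ← doubleEgf_card_noIsolatedRight_inter_noIsolatedLeft,
    eq_sub_iff_add_eq, ← map_add]
  congr 1 with m n
  rw [Pi.add_apply, Pi.add_apply]
  exact_mod_cast card_sdiff_add_card_inter _ _

theorem doubleEgf_two_pow_sub_two :
    doubleEgf (fun m n ↦ ((2 ^ n - 2 : ℕ) : ℚ) ^ m) = ExpNeg ^ 2 * Psi + (1 - ExpNeg) := by
  have hone : (1 : PowerSeries ℚ) = PowerSeries.mk fun k ↦ (0 : ℚ) ^ k / k.factorial := by
    ext k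
    rcases k with _ | k <;> simp [PowerSeries.coeff_one]
  rw [expNeg_sq_mul_Psi, hone, ExpNeg, ← doubleEgf_ite_right_eq_zero,
    ← doubleEgf_ite_right_eq_zero, ← map_sub, ← map_add]
  congr 1 with m n
  rcases n with _ | n
  · norm_num
  · have : 2 ≤ 2 ^ (n + 1) := Nat.le_self_pow n.succ_ne_zero 2
    simp [Nat.cast_sub this]

theorem doubleEgf_card_compl_noAllSeeingLeft_union_noIsolatedLeft :
    doubleEgf (fun m n ↦
        (#(noAllSeeingLeft (Fin m) (Fin n) ∪ noIsolatedLeft (Fin m) (Fin n))ᶜ : ℚ)) =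
      Psi - 2 * (ExpNeg * Psi) + (ExpNeg ^ 2 * Psi + (1 - ExpNeg)) := by
  rw [← doubleEgf_two_pow_sub_two, expNeg_mul_Psi, ← doubleEgf_two_pow, two_mul,
    ← map_add, ← map_sub, ← map_add]
  congr 1 with m n
  have h := card_compl_noAllSeeingLeft_union_noIsolatedLeft (Fin m) (Fin n)
  rw [Fintype.card_fin, Fintype.card_fin] at h
  have h' := congrArg (Nat.cast (R := ℚ)) h
  push_cast [Nat.one_le_two_pow] at h'
  simp only [Pi.add_apply, Pi.sub_apply]
  linarith

theorem bIsoNoIso_eq_card (m n : ℕ) :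
    bIsoNoIso m n = #((noIsolatedRight (Fin m) (Fin n) \ noIsolatedLeft (Fin m) (Fin n)) ∩
      noAllSeeingLeft (Fin m) (Fin n)) := by
  refine Nat.subtype_card _ fun R ↦ ?_
  simp only [mem_inter, mem_sdiff, mem_noIsolatedLeft, mem_noIsolatedRight, mem_noAllSeeingLeft,
    NoAllSeeing, IsolatedLeft, IsolatedRight, not_forall, not_exists, not_not]
  constructor
  · rintro ⟨⟨hright, i, hi⟩, hleft⟩
    exact ⟨⟨hleft, fun j ↦ ⟨i, hi j⟩⟩, ⟨i, hi⟩, hright⟩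
  · rintro ⟨⟨hleft, -⟩, hi, hright⟩
    exact ⟨⟨hright, hi⟩, hleft⟩

theorem bIsoNoIso_add_card (m n : ℕ) :
    bIsoNoIso m n + #(noAllSeeingLeft (Fin m) (Fin n) ∪ noIsolatedLeft (Fin m) (Fin n))ᶜ =
      #(noIsolatedRight (Fin m) (Fin n) \ noIsolatedLeft (Fin m) (Fin n)) := by
  rw [bIsoNoIso_eq_card, ← noIsolatedRight_sdiff_noIsolatedLeft_sdiff_noAllSeeingLeft,
    card_inter_add_card_sdiff]

theorem bIsoNoIso_zero_left (n : ℕ) : bIsoNoIso 0 n = 0 := by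
  simp [bIsoNoIso]

theorem bIsoNoIso_zero_right (m : ℕ) : bIsoNoIso m 0 = 0 := by
  have : IsEmpty {R : Finset (Fin m × Fin 0) //
      NoAllSeeing R ∧ (∃ i, IsolatedLeft R i) ∧ ∀ j, ¬ IsolatedRight R j} :=
    ⟨fun ⟨_, hR, ⟨i, _⟩, _⟩ ↦ hR.1 i fun j ↦ j.elim0⟩
  exact Nat.card_of_isEmpty

theorem egf2_eq_doubleEgf {b : ℕ → ℕ → ℕ} (hl : ∀ n, b 0 n = 0) (hr : ∀ m, b m 0 = 0) :
    egf2 b = doubleEgf fun m n ↦ (b m n : ℚ) := by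
  ext N
  rw [egf2, PowerSeries.coeff_mk, coeff_doubleEgf]
  refine sum_filter_of_ne fun ⟨m, n⟩ _ hmn ↦ ?_
  simp only [Nat.one_le_iff_ne_zero]
  constructor <;> rintro rfl <;> simp [hl, hr] at hmn

theorem egf_isoNoIso :
    egf2 bIsoNoIso = (1 - ExpNeg) * ((2 * ExpNeg - 1) * Psi - 1) := by
  have h : egf2 bIsoNoIso = (ExpNeg * Psi - ExpNeg ^ 2 * Psi) -
      (Psi - 2 * (ExpNeg * Psi) + (ExpNeg ^ 2 * Psi + (1 - ExpNeg))) := by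
    rw [egf2_eq_doubleEgf bIsoNoIso_zero_left bIsoNoIso_zero_right,
      ← doubleEgf_card_noIsolatedRight_sdiff_noIsolatedLeft,
      ← doubleEgf_card_compl_noAllSeeingLeft_union_noIsolatedLeft, eq_sub_iff_add_eq, ← map_add]
    congr 1 with m n
    rw [Pi.add_apply, Pi.add_apply]
    exact_mod_cast bIsoNoIso_add_card m n
  rw [h]
  ring
end
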